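/- arXiv:2112.04817 — 2 statements merged into one kernel-verified Lean document; each statement's English description precedes it below -/
import Mathlib

section
/- Let k be a fixed positive integer, let O be a bounded self-adjoint operator on L²(ℝ^{3k}), and let φ ∈ L²(ℝ³) with ‖φ‖ = 1. For each N ≥ k let ψ_N ∈ L²_s(ℝ^{3N}) be a permutation-symmetric wave function with ‖ψ_N‖ = 1 exhibiting complete Bose–Einstein condensation in φ, in the sense that for every fixed ℓ ≥ 1 and every bounded operator B on L²(ℝ^{3ℓ}) one has ⟨ψ_N, B_{(1,…,ℓ)} ψ_N⟩ → ⟨φ^{⊗ℓ}, B φ^{⊗ℓ}⟩ as N → ∞. Then the centred averaged sum satisfies a law of large numbers: for every δ > 0, the spectral probability ⟨ψ_N, χ_{(δ,∞)}(|binom(N,k)^{-1} Σ_{i_k ∈ I_N^{(k)}} (O_{i_k} − ⟨φ^{⊗k}, O φ^{⊗k}⟩)| ) ψ_N⟩ tends to 0 as N → ∞, where χ_{(δ,∞)} is applied via the Borel functional calculus (spectral measure) of the bounded self-adjoint operator binom(N,k)^{-1} Σ_{i_k} (O_{i_k} − ⟨φ^{⊗k}, O φ^{⊗k}⟩). -/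
/-!
The proof is Chebyshev's inequality with the second moment `⟨ψ_N, T_N² ψ_N⟩`.  Writing
`A = O - ⟨φ^{⊗k}, O φ^{⊗k}⟩`, this moment is `binom(N,k)⁻² ∑_{ι,ι'} ⟨ψ_N, A_ι A_ι' ψ_N⟩`.

* Pairs `(ι, ι')` with a common index are a fraction `O(1/N)` of all pairs (`card_overlap`), and
  each contributes at most `(‖O‖ + |⟨φ^{⊗k}, O φ^{⊗k}⟩|)²`.  This needs the `N`-independent bound
  `‖O_ι‖ ≤ ‖O‖` (`norm_lift_le`).
* By symmetry of `ψ_N`, every disjoint pair contributes the same as the pair occupying the first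
  `2k` variables (`IsLift.apply_permU`).  The corresponding operator is the lift of the
  `2k`-particle operator `A ⊗ A` (`IsLift.trans_tn`), so condensation with `ℓ = 2k` gives the
  limit `⟨φ^{⊗k}, A φ^{⊗k}⟩² = 0` (`condensate_zero`).

A lift is specified only on products `f ⊗ g`; totality of these products in `L²`
(`span_tens_dense`) turns that specification into statements about all vectors.  The operator
`A ⊗ A` on `2k` particles needs no separate construction: it is the composition of the two given
lifts of `A` to `N = 2k` particles.
-/

/- Law of large numbers for bounded k-particle operators in a Bose-Einstein condensate. -/

open MeasureTheory Filter
open scoped ENNReal ComplexInnerProductSpace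

noncomputable section

/-- Physical one-particle configuration space `ℝ³`. -/
abbrev R3 : Type := EuclideanSpace ℝ (Fin 3)

/-- The one-particle Hilbert space `L²(ℝ³)`. -/
abbrev OneH : Type := Lp ℂ 2 (volume : Measure R3)

/-- The `m`-particle Hilbert space `L²(ℝ^{3m})`, realized as `L²((ℝ³)^m)`. -/
abbrev HS (m : ℕ) : Type := Lp ℂ 2 (volume : Measure (Fin m → R3))

/-- `Φ` is the `m`-fold tensor power `φ^{⊗m}`, i.e. a.e. equal to
`(x_1, …, x_m) ↦ ∏_j φ(x_j)`. -/
def IsTensorPow (m : ℕ) (φ : OneH) (Φ : HS m) : Prop :=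
  ⇑Φ =ᵐ[volume] fun x : Fin m → R3 => ∏ j, φ (x j)

/-- `T` is the lift `O_{i_k}` of the `k`-particle operator `O` to the `N`-particle space,
acting as `O` in the variables `x_{ι 0}, …, x_{ι (k-1)}` and as the identity elsewhere.
It is characterized by its action on products `f(x ∘ ι) · g(x)` where `g` depends only on
the variables outside the range of `ι`. -/
def IsLift (k N : ℕ) (O : HS k →L[ℂ] HS k) (ι : Fin k → Fin N)
    (T : HS N →L[ℂ] HS N) : Prop :=
  ∀ (f : HS k) (g : (Fin N → R3) → ℂ) (F G : HS N),
    (∀ x y : Fin N → R3, (∀ j, j ∉ Set.range ι → x j = y j) → g x = g y) →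
    (⇑F =ᵐ[volume] fun x => f (x ∘ ι) * g x) →
    (⇑G =ᵐ[volume] fun x => (O f) (x ∘ ι) * g x) →
    T F = G

/-! ### Elementary tensors in `L²` of a product space -/

section Tensor

variable {α β γ : Type*} [MeasurableSpace α] [MeasurableSpace β] [MeasurableSpace γ]
  {μa : Measure α} {μb : Measure β} {μc : Measure γ}

lemma memLp_tens (e : γ ≃ᵐ α × β) (he : MeasurePreserving e μc (μa.prod μb))
    {f : α → ℂ} {g : β → ℂ} (hf : MemLp f 2 μa) (hg : MemLp g 2 μb) :
    MemLp (fun z => f (e z).1 * g (e z).2) 2 μc := by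
  have h : MemLp (fun z : α × β => f z.1 * g z.2) 2 (μa.prod μb) := by
    have hm : AEStronglyMeasurable (fun z : α × β => f z.1 * g z.2) (μa.prod μb) :=
      (hf.1.comp_fst).mul (hg.1.comp_snd)
    rw [memLp_two_iff_integrable_sq_norm hm]
    have := ((memLp_two_iff_integrable_sq_norm hf.1).1 hf).mul_prod
      ((memLp_two_iff_integrable_sq_norm hg.1).1 hg)
    refine this.congr (ae_of_all _ fun z => ?_)
    simp [mul_pow]
  exact h.comp_measurePreserving he

/-- The elementary tensor `f ⊗ g`, transported to `L²(γ)` along a measure preserving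
identification `e : γ ≃ α × β`. -/
def tens (e : γ ≃ᵐ α × β) (he : MeasurePreserving e μc (μa.prod μb))
    (f : Lp ℂ 2 μa) (g : Lp ℂ 2 μb) : Lp ℂ 2 μc :=
  (memLp_tens e he (Lp.memLp f) (Lp.memLp g)).toLp

lemma ae_fst (e : γ ≃ᵐ α × β) {P : α → Prop} (h : ∀ᵐ a ∂μa, P a) (he : MeasurePreserving e μc (μa.prod μb)) :
    ∀ᵐ z ∂μc, P (e z).1 :=
  he.quasiMeasurePreserving.ae (Measure.quasiMeasurePreserving_fst.ae h)

lemma ae_snd (e : γ ≃ᵐ α × β) {P : β → Prop} (h : ∀ᵐ a ∂μb, P a) (he : MeasurePreserving e μc (μa.prod μb)) :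
    ∀ᵐ z ∂μc, P (e z).2 :=
  he.quasiMeasurePreserving.ae (Measure.quasiMeasurePreserving_snd.ae h)

variable (e : γ ≃ᵐ α × β) (he : MeasurePreserving e μc (μa.prod μb))

lemma tens_coe (f : Lp ℂ 2 μa) (g : Lp ℂ 2 μb) :
    ⇑(tens e he f g) =ᵐ[μc] fun z => f (e z).1 * g (e z).2 :=
  MemLp.coeFn_toLp _

variable [SigmaFinite μa] [SigmaFinite μb]

lemma inner_tens (f f' : Lp ℂ 2 μa) (g g' : Lp ℂ 2 μb) :
    ⟪tens e he f g, tens e he f' g'⟫ = ⟪f, f'⟫ * ⟪g, g'⟫ := by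
  rw [L2.inner_def, L2.inner_def, L2.inner_def, ← integral_prod_mul,
    ← he.integral_comp e.measurableEmbedding]
  refine integral_congr_ae ?_
  filter_upwards [tens_coe e he f g, tens_coe e he f' g'] with z h1 h2
  rw [h1, h2]
  simp only [RCLike.inner_apply, map_mul]
  ring

lemma norm_tens (f : Lp ℂ 2 μa) (g : Lp ℂ 2 μb) : ‖tens e he f g‖ = ‖f‖ * ‖g‖ := by
  have h := inner_tens e he f f g g
  rw [inner_self_eq_norm_sq_to_K, inner_self_eq_norm_sq_to_K, inner_self_eq_norm_sq_to_K] at h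
  have h' : ‖tens e he f g‖ ^ 2 = (‖f‖ * ‖g‖) ^ 2 := by
    rw [mul_pow]; exact_mod_cast h
  exact (sq_eq_sq₀ (norm_nonneg _) (by positivity)).1 h'

/-- For fixed `g`, the map `f ↦ f ⊗ g` as a bounded operator. -/
def tensL (g : Lp ℂ 2 μb) : Lp ℂ 2 μa →L[ℂ] Lp ℂ 2 μc :=
  LinearMap.mkContinuous
    { toFun := fun f => tens e he f g
      map_add' := fun f f' => by
        apply Lp.ext
        filter_upwards [tens_coe e he (f + f') g, tens_coe e he f g, tens_coe e he f' g,
          Lp.coeFn_add (tens e he f g) (tens e he f' g),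
          ae_fst e (Lp.coeFn_add f f') he] with z h1 h2 h3 h4 h5
        rw [h1, h4, Pi.add_apply, h2, h3, h5, Pi.add_apply, add_mul]
      map_smul' := fun c f => by
        apply Lp.ext
        filter_upwards [tens_coe e he (c • f) g, tens_coe e he f g,
          Lp.coeFn_smul c (tens e he f g),
          ae_fst e (Lp.coeFn_smul c f) he] with z h1 h2 h4 h5
        simp only [RingHom.id_apply]
        rw [h1, h4, Pi.smul_apply, h2, h5, Pi.smul_apply, smul_eq_mul, smul_eq_mul, mul_assoc] }
    ‖g‖ fun f => by
      change ‖tens e he f g‖ ≤ _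
      rw [norm_tens, mul_comm]

/-- The elementary tensors are total: a vector orthogonal to all of them integrates to zero
over every measurable rectangle, hence over every measurable set. -/
lemma span_tens_dense :
    (Submodule.span ℂ {F | ∃ f g, F = tens e he f g}).topologicalClosure = ⊤ := by
  rw [Submodule.topologicalClosure_eq_top_iff, Submodule.eq_bot_iff]
  intro F hF
  rw [Submodule.mem_orthogonal] at hF
  set F' : α × β → ℂ := fun z => F (e.symm z) with hF'
  have hes : MeasurePreserving e.symm (μa.prod μb) μc := he.symm e
  have hF'L : MemLp F' 2 (μa.prod μb) := (Lp.memLp F).comp_measurePreserving hes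
  have hrect : ∀ s t, MeasurableSet s → MeasurableSet t → μa s < ∞ → μb t < ∞ →
      ∫ z in s ×ˢ t, F' z ∂(μa.prod μb) = 0 := by
    intro s t hs ht hsf htf
    have h := hF _ (Submodule.subset_span ⟨indicatorConstLp 2 hs hsf.ne 1,
      indicatorConstLp 2 ht htf.ne 1, rfl⟩)
    rw [L2.inner_def] at h
    rw [← integral_indicator (hs.prod ht), ← he.integral_comp e.measurableEmbedding, ← h]
    refine integral_congr_ae ?_
    filter_upwards [tens_coe e he (indicatorConstLp 2 hs hsf.ne (1:ℂ))
      (indicatorConstLp 2 ht htf.ne (1:ℂ)),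
      ae_fst e (indicatorConstLp_coeFn (p := 2) (hs := hs) (hμs := hsf.ne) (c := (1:ℂ))) he,
      ae_snd e (indicatorConstLp_coeFn (p := 2) (hs := ht) (hμs := htf.ne) (c := (1:ℂ))) he]
      with z h1 h2 h3
    rw [h1, h2, h3]
    by_cases h4 : (e z).1 ∈ s <;> by_cases h5 : (e z).2 ∈ t <;>
      simp [Set.indicator, h4, h5, hF']
  have hzero : F' =ᵐ[μa.prod μb] 0 := by
    have hn : ∀ n, F' =ᵐ[(μa.prod μb).restrict
        (spanningSets μa n ×ˢ spanningSets μb n)] 0 := by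
      intro n
      set R := spanningSets μa n ×ˢ spanningSets μb n with hR
      have hRm : MeasurableSet R :=
        (measurableSet_spanningSets μa n).prod (measurableSet_spanningSets μb n)
      have hRf : (μa.prod μb) R < ∞ := by
        rw [hR, Measure.prod_prod]
        exact ENNReal.mul_lt_top (measure_spanningSets_lt_top _ _)
          (measure_spanningSets_lt_top _ _)
      have : IsFiniteMeasure ((μa.prod μb).restrict R) := ⟨by simpa using hRf⟩
      have hint : Integrable F' ((μa.prod μb).restrict R) :=
        (hF'L.restrict R).integrable (by norm_num)
      refine hint.ae_eq_zero_of_forall_setIntegral_eq_zero ?_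
      have htot : ∫ z, F' z ∂((μa.prod μb).restrict R) = 0 :=
        hrect _ _ (measurableSet_spanningSets μa n) (measurableSet_spanningSets μb n)
          (measure_spanningSets_lt_top _ _) (measure_spanningSets_lt_top _ _)
      intro s hs _
      induction s, hs using MeasurableSpace.induction_on_inter generateFrom_prod.symm
        isPiSystem_prod with
      | empty => simp
      | basic t ht =>
        obtain ⟨a, ha, b, hb, rfl⟩ := ht
        simp only [Set.mem_ofPred_eq] at ha hb
        rw [Measure.restrict_restrict (ha.prod hb), hR, Set.prod_inter_prod]
        exact hrect _ _ (ha.inter (measurableSet_spanningSets μa n))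
          (hb.inter (measurableSet_spanningSets μb n))
          ((measure_mono Set.inter_subset_right).trans_lt (measure_spanningSets_lt_top _ _))
          ((measure_mono Set.inter_subset_right).trans_lt (measure_spanningSets_lt_top _ _))
      | compl t ht ih =>
        have := integral_add_compl ht hint
        rw [ih (measure_lt_top _ _), htot, zero_add] at this
        exact this
      | iUnion f hd hm ih =>
        rw [integral_iUnion hm hd hint.integrableOn]
        simp [ih]
    have h2 : (μa.prod μb).restrict (⋃ n, spanningSets μa n ×ˢ spanningSets μb n)
        = μa.prod μb := by
      have : (⋃ n, spanningSets μa n ×ˢ spanningSets μb n) = Set.univ := by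
        rw [Set.iUnion_prod_of_monotone (monotone_spanningSets μa) (monotone_spanningSets μb),
          iUnion_spanningSets, iUnion_spanningSets, Set.univ_prod_univ]
      rw [this, Measure.restrict_univ]
    rw [← h2]
    exact (ae_restrict_iUnion_iff _ _).2 hn
  rw [Lp.eq_zero_iff_ae_eq_zero]
  have := he.quasiMeasurePreserving.ae hzero
  filter_upwards [this] with z hz
  simpa [hF'] using hz

/-- Two bounded operators agreeing on elementary tensors are equal. -/
lemma ext_tens {E : Type*} [NormedAddCommGroup E] [NormedSpace ℂ E]
    {S T : Lp ℂ 2 μc →L[ℂ] E}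
    (h : ∀ f g, S (tens e he f g) = T (tens e he f g)) : S = T := by
  have hle : (Submodule.span ℂ {F | ∃ f g, F = tens e he f g}).topologicalClosure
      ≤ LinearMap.ker (S - T).toLinearMap := by
    refine Submodule.topologicalClosure_minimal _ ?_ (S - T).isClosed_ker
    rw [Submodule.span_le]
    rintro _ ⟨f, g, rfl⟩
    simp [h]
  rw [span_tens_dense] at hle
  ext1 x
  have := hle (Submodule.mem_top (x := x))
  simpa [sub_eq_zero] using this

/-- If `F = f ⊗ g` lies in `L²` with `f ≠ 0`, then `g` agrees a.e. with an `L²` function: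
a suitable slice of `F` is a nonzero multiple of `g`. No measurability of `g` is assumed. -/
lemma exists_slice (he : MeasurePreserving e μc (μa.prod μb)) (F : Lp ℂ 2 μc) (f : Lp ℂ 2 μa) (hf : f ≠ 0) (g : β → ℂ)
    (hF : ⇑F =ᵐ[μc] fun z => f (e z).1 * g (e z).2) :
    ∃ h : Lp ℂ 2 μb, ⇑h =ᵐ[μb] g := by
  have hes : MeasurePreserving e.symm (μa.prod μb) μc := he.symm e
  set F' : α × β → ℂ := fun z => F (e.symm z) with hF'
  have hF'L : MemLp F' 2 (μa.prod μb) := (Lp.memLp F).comp_measurePreserving hes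
  have h1 : ∀ᵐ z ∂(μa.prod μb), F' z = f z.1 * g z.2 := by
    have := hes.quasiMeasurePreserving.ae hF
    filter_upwards [this] with z hz
    simpa [hF'] using hz
  have h2 := Measure.ae_ae_of_ae_prod h1
  have h3 := hF'L.1.prodMk_left
  have h4 := ((memLp_two_iff_integrable_sq_norm hF'L.1).1 hF'L).prod_right_ae
  have hf' : ∃ᵐ x ∂μa, f x ≠ 0 := by
    intro h
    apply hf
    rw [Lp.eq_zero_iff_ae_eq_zero]
    filter_upwards [h] with x hx using by simpa using hx
  obtain ⟨x, hx, h2, h3, h4⟩ := (hf'.and_eventually (h2.and (h3.and h4))).exists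
  have h5 : MemLp (fun y => F' (x, y)) 2 μb := (memLp_two_iff_integrable_sq_norm h3).2 h4
  refine ⟨(f x)⁻¹ • h5.toLp, ?_⟩
  filter_upwards [Lp.coeFn_smul (f x)⁻¹ h5.toLp, h5.coeFn_toLp, h2] with y h6 h7 h8
  rw [h6, Pi.smul_apply, h7, h8, smul_eq_mul, inv_mul_cancel_left₀ hx]

/-- A lift of a self-adjoint operator is symmetric on elementary tensors, hence everywhere. -/
lemma lift_symm {O : Lp ℂ 2 μa →L[ℂ] Lp ℂ 2 μa} (hO : IsSelfAdjoint O)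
    {T : Lp ℂ 2 μc →L[ℂ] Lp ℂ 2 μc}
    (h : ∀ f g, T (tens e he f g) = tens e he (O f) g) (u v : Lp ℂ 2 μc) :
    ⟪T u, v⟫ = ⟪u, T v⟫ := by
  have hT : ContinuousLinearMap.adjoint T = T := by
    refine ext_tens e he fun f g => ?_
    have : (innerSL ℂ (ContinuousLinearMap.adjoint T (tens e he f g))) =
        innerSL ℂ (T (tens e he f g)) := by
      refine ext_tens e he fun f' g' => ?_
      simp only [innerSL_apply_apply]
      rw [ContinuousLinearMap.adjoint_inner_left, h, h, inner_tens, inner_tens]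
      congr 1
      rw [← ContinuousLinearMap.adjoint_inner_left, hO.adjoint_eq]
    exact (innerSL_inj).1 this
  rw [← ContinuousLinearMap.adjoint_inner_right, hT]

/-- The lift of a self-adjoint operator `O` has norm at most `‖O‖`. On a finite sum `v` of
elementary tensors `‖T ^ n v‖` is at most a constant times `‖O‖ ^ n`, while symmetry of `T`
makes `n ↦ ‖T ^ n v‖` log-convex; so `‖T v‖ ≤ ‖O‖ ‖v‖`. -/
lemma norm_lift_le {O : Lp ℂ 2 μa →L[ℂ] Lp ℂ 2 μa} (hO : IsSelfAdjoint O)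
    {T : Lp ℂ 2 μc →L[ℂ] Lp ℂ 2 μc}
    (h : ∀ f g, T (tens e he f g) = tens e he (O f) g) : ‖T‖ ≤ ‖O‖ := by
  have hpow : ∀ (n : ℕ) f g, (T ^ n) (tens e he f g) = tens e he ((O ^ n) f) g := by
    intro n
    induction n with
    | zero => intro f g; simp
    | succ n ih =>
      intro f g
      rw [pow_succ', pow_succ', mul_apply_eq_comp, ih, h]
      rfl
  have hOpow : ∀ (n : ℕ) f, ‖(O ^ n) f‖ ≤ ‖O‖ ^ n * ‖f‖ := by
    intro n
    induction n with
    | zero => intro f; simp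
    | succ n ih =>
      intro f
      rw [pow_succ', mul_apply_eq_comp]
      calc _ ≤ ‖O‖ * ‖(O ^ n) f‖ := O.le_opNorm _
        _ ≤ ‖O‖ * (‖O‖ ^ n * ‖f‖) := by gcongr; exact ih f
        _ = _ := by ring
  have hbd : ∀ v ∈ Submodule.span ℂ {F | ∃ f g, F = tens e he f g},
      ∃ C : ℝ, 0 ≤ C ∧ ∀ n : ℕ, ‖(T ^ n) v‖ ≤ C * ‖O‖ ^ n := by
    intro v hv
    induction hv using Submodule.span_induction with
    | mem x hx =>
      obtain ⟨f, g, rfl⟩ := hx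
      refine ⟨‖f‖ * ‖g‖, by positivity, fun n => ?_⟩
      rw [hpow, norm_tens]
      calc _ ≤ (‖O‖ ^ n * ‖f‖) * ‖g‖ := by gcongr; exact hOpow n f
        _ = _ := by ring
    | zero => exact ⟨0, le_rfl, fun n => by simp⟩
    | add x y _ _ hx hy =>
      obtain ⟨C, hC, h1⟩ := hx
      obtain ⟨D, hD, h2⟩ := hy
      refine ⟨C + D, by positivity, fun n => ?_⟩
      rw [map_add, add_mul]
      exact (norm_add_le _ _).trans (add_le_add (h1 n) (h2 n))
    | smul a x _ hx =>
      obtain ⟨C, hC, h1⟩ := hx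
      refine ⟨‖a‖ * C, by positivity, fun n => ?_⟩
      rw [map_smul, norm_smul, mul_assoc]
      gcongr
      exact h1 n
  have hconv : ∀ (v : Lp ℂ 2 μc), ‖T v‖ ^ 2 ≤ ‖v‖ * ‖T (T v)‖ := by
    intro v
    have h1 : ((‖T v‖ ^ 2 : ℝ) : ℂ) = ⟪v, T (T v)⟫ := by
      rw [← lift_symm e he hO h, inner_self_eq_norm_sq_to_K]; simp
    calc ‖T v‖ ^ 2 = ‖((‖T v‖ ^ 2 : ℝ) : ℂ)‖ := by
          rw [Complex.norm_real, Real.norm_of_nonneg (by positivity)]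
      _ ≤ _ := by rw [h1]; exact norm_inner_le_norm _ _
  have hspan : ∀ v ∈ Submodule.span ℂ {F | ∃ f g, F = tens e he f g},
      ‖T v‖ ≤ ‖O‖ * ‖v‖ := by
    intro v hv
    obtain ⟨C, hC, hb⟩ := hbd v hv
    by_contra! hlt
    have hv0 : 0 < ‖v‖ := by
      rcases (norm_nonneg v).eq_or_lt with h0 | h0
      · rw [eq_comm, norm_eq_zero] at h0
        simp [h0] at hlt
      · exact h0
    -- `r` is the first growth ratio; log-convexity forces all later ratios to be at least `r`.
    set r := ‖T v‖ / ‖v‖ with hr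
    have hr1 : ‖O‖ < r := by rw [hr, lt_div_iff₀ hv0]; exact hlt
    have hr0 : 0 < r := (norm_nonneg O).trans_lt hr1
    have hstep : ∀ n : ℕ, 0 < ‖(T ^ n) v‖ ∧ r * ‖(T ^ n) v‖ ≤ ‖(T ^ (n + 1)) v‖ := by
      intro n
      induction n with
      | zero =>
        refine ⟨by simpa using hv0, ?_⟩
        simp [hr, div_mul_cancel₀ _ hv0.ne']
      | succ n ih =>
        obtain ⟨h1, h2⟩ := ih
        have h3 : 0 < ‖(T ^ (n + 1)) v‖ := (mul_pos hr0 h1).trans_le h2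
        refine ⟨h3, ?_⟩
        have h4 := hconv ((T ^ n) v)
        have e1 : T ((T ^ n) v) = (T ^ (n + 1)) v := by
          rw [pow_succ', mul_apply_eq_comp]
        have e2 : T ((T ^ (n + 1)) v) = (T ^ (n + 1 + 1)) v := by
          rw [pow_succ' T (n + 1), mul_apply_eq_comp]
        rw [e1, e2] at h4
        have h5 : ‖(T ^ n) v‖ * (r * ‖(T ^ (n + 1)) v‖) ≤
            ‖(T ^ n) v‖ * ‖(T ^ (n + 1 + 1)) v‖ := by
          refine le_trans ?_ h4
          rw [sq]
          calc _ = (r * ‖(T ^ n) v‖) * ‖(T ^ (n + 1)) v‖ := by ring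
            _ ≤ _ := by gcongr
        exact le_of_mul_le_mul_left h5 h1
    have hgrow : ∀ n : ℕ, r ^ n * ‖v‖ ≤ ‖(T ^ n) v‖ := by
      intro n
      induction n with
      | zero => simp
      | succ n ih =>
        refine le_trans ?_ (hstep n).2
        rw [pow_succ', mul_assoc]
        gcongr
    -- Dividing by `C + 1` rather than `C` avoids the case `C = 0`.
    have hall : ∀ n : ℕ, ‖v‖ / (C + 1) ≤ (‖O‖ / r) ^ n := by
      intro n
      rw [div_pow, div_le_div_iff₀ (by positivity) (by positivity)]
      calc ‖v‖ * r ^ n = r ^ n * ‖v‖ := by ring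
        _ ≤ C * ‖O‖ ^ n := (hgrow n).trans (hb n)
        _ ≤ (C + 1) * ‖O‖ ^ n := by gcongr; linarith
        _ = _ := by ring
    have hlim : Tendsto (fun n : ℕ => (‖O‖ / r) ^ n) atTop (nhds 0) :=
      tendsto_pow_atTop_nhds_zero_of_lt_one (by positivity) ((div_lt_one hr0).2 hr1)
    have := ge_of_tendsto' hlim hall
    have : 0 < ‖v‖ / (C + 1) := by positivity
    linarith
  refine ContinuousLinearMap.opNorm_le_bound _ (norm_nonneg _) fun v => ?_
  have hcl : IsClosed {v : Lp ℂ 2 μc | ‖T v‖ ≤ ‖O‖ * ‖v‖} :=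
    isClosed_le (by fun_prop) (by fun_prop)
  have hv : v ∈ closure
      (Submodule.span ℂ {F | ∃ f g, F = tens e he f g} : Set (Lp ℂ 2 μc)) := by
    rw [← Submodule.topologicalClosure_coe, span_tens_dense]; trivial
  exact closure_minimal hspan hcl hv

end Tensor

/-! ### Lifts of `k`-particle operators -/

section Concrete

/-- Splitting of the coordinates along an identification of the index set with `a ⊕ b`. -/
def sumSplit {a b n : Type*} [Fintype a] [Fintype b] [Fintype n] (idx : a ⊕ b ≃ n) :
    (n → R3) ≃ᵐ (a → R3) × (b → R3) :=
  (MeasurableEquiv.piCongrLeft (fun _ => R3) idx).symm.trans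
    (MeasurableEquiv.sumPiEquivProdPi fun _ => R3)

lemma sumSplit_apply {a b n : Type*} [Fintype a] [Fintype b] [Fintype n] (idx : a ⊕ b ≃ n)
    (x : n → R3) :
    sumSplit idx x = (fun i => x (idx (Sum.inl i)), fun i => x (idx (Sum.inr i))) := rfl

lemma sumSplit_mp {a b n : Type*} [Fintype a] [Fintype b] [Fintype n] (idx : a ⊕ b ≃ n) :
    MeasurePreserving (sumSplit idx) (volume : Measure (n → R3))
      ((volume : Measure (a → R3)).prod (volume : Measure (b → R3))) :=
  ((volume_measurePreserving_piCongrLeft (fun _ => R3) idx).symm).trans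
    (volume_measurePreserving_sumPiEquivProdPi fun _ => R3)

open scoped Classical in
/-- The index set `Fin N` as the disjoint union of the selected indices `ι 0, …, ι (k - 1)`
and the remaining ones. -/
def idx {k N : ℕ} (ι : Fin k ↪ Fin N) : Fin k ⊕ {j // j ∉ Set.range ι} ≃ Fin N :=
  (Equiv.sumCongr (Equiv.ofInjective ι ι.injective) (Equiv.refl _)).trans
    (Equiv.sumCompl (· ∈ Set.range ι))

/-- The `N`-particle function `f(x ∘ ι) h(x|rest)`. -/
def tn {k N : ℕ} (ι : Fin k ↪ Fin N) (f : HS k)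
    (h : Lp ℂ 2 (volume : Measure ({j // j ∉ Set.range ι} → R3))) : HS N :=
  tens (sumSplit (idx ι)) (sumSplit_mp (idx ι)) f h

lemma tn_coe {k N : ℕ} (ι : Fin k ↪ Fin N) (f : HS k)
    (h : Lp ℂ 2 (volume : Measure ({j // j ∉ Set.range ι} → R3))) :
    ⇑(tn ι f h) =ᵐ[volume] fun x => f (x ∘ ι) * h (fun j => x j) :=
  tens_coe _ _ f h

lemma ae_comp_emb {k N : ℕ} (ι : Fin k ↪ Fin N) {P : (Fin k → R3) → Prop}
    (h : ∀ᵐ y, P y) : ∀ᵐ x : Fin N → R3, P (x ∘ ι) :=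
  ae_fst (sumSplit (idx ι)) h (sumSplit_mp (idx ι))

lemma IsLift.apply_tn {k N : ℕ} {O : HS k →L[ℂ] HS k} {ι : Fin k ↪ Fin N} {T : HS N →L[ℂ] HS N}
    (hT : IsLift k N O ι T) (f : HS k)
    (h : Lp ℂ 2 (volume : Measure ({j // j ∉ Set.range ι} → R3))) :
    T (tn ι f h) = tn ι (O f) h := by
  refine hT f (fun x => h (fun j => x j)) _ _ ?_ (tn_coe ι f h) (tn_coe ι (O f) h)
  intro x y hxy
  have : (fun j : {j // j ∉ Set.range ι} => x j) =
      fun j : {j // j ∉ Set.range ι} => y j := funext fun j => hxy j j.2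
  simp only [this]

/-- To be a lift it suffices to act correctly on genuine elementary tensors: the factor `g`
in `IsLift`, although not assumed measurable, is a.e. an `L²` function unless `f = 0`. -/
lemma isLift_of_tn {k N : ℕ} {O : HS k →L[ℂ] HS k} {ι : Fin k ↪ Fin N} {T : HS N →L[ℂ] HS N}
    (hT : ∀ f h, T (tn ι f h) = tn ι (O f) h) : IsLift k N O ι T := by
  intro f g F G hg hF hG
  by_cases hf : f = 0
  · subst hf
    have hz : ∀ᵐ y : Fin k → R3, (0 : HS k) y = 0 := Lp.coeFn_zero _ _ _
    have hF0 : F = 0 := by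
      rw [Lp.eq_zero_iff_ae_eq_zero]
      filter_upwards [hF, ae_comp_emb ι hz] with x h1 h2
      rw [h1, h2, zero_mul]; rfl
    have hG0 : G = 0 := by
      rw [Lp.eq_zero_iff_ae_eq_zero]
      filter_upwards [hG, ae_comp_emb ι hz] with x h1 h2
      rw [h1, map_zero, h2, zero_mul]; rfl
    rw [hF0, hG0, map_zero]
  · set e := sumSplit (idx ι) with he
    set g' : ({j // j ∉ Set.range ι} → R3) → ℂ := fun y => g (e.symm (0, y)) with hg'
    have hgg : ∀ x, g x = g' (fun j => x j) := by
      intro x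
      apply hg
      intro j hj
      have h1 : e (e.symm (0, fun j : {j // j ∉ Set.range ι} => x j)) = _ :=
        e.apply_symm_apply _
      exact (congrFun (congrArg Prod.snd h1) ⟨j, hj⟩).symm
    obtain ⟨h, hh⟩ := exists_slice e (sumSplit_mp (idx ι)) F f hf g' (by
      filter_upwards [hF] with x hx
      rw [hx, hgg]; rfl)
    have hh' := ae_snd e hh (sumSplit_mp (idx ι))
    have hF' : F = tn ι f h := by
      apply Lp.ext
      filter_upwards [hF, tn_coe ι f h, hh'] with x h1 h2 h3
      rw [h1, h2, hgg]
      congr 1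
      exact h3.symm
    have hG' : G = tn ι (O f) h := by
      apply Lp.ext
      filter_upwards [hG, tn_coe ι (O f) h, hh'] with x h1 h2 h3
      rw [h1, h2, hgg]
      congr 1
      exact h3.symm
    rw [hF', hG', hT]

lemma IsLift.sub_smul {k N : ℕ} {O : HS k →L[ℂ] HS k} {ι : Fin k ↪ Fin N}
    {T : HS N →L[ℂ] HS N} (hT : IsLift k N O ι T) (c : ℂ) :
    IsLift k N (O - c • 1) ι (T - c • 1) := by
  refine isLift_of_tn fun f h => ?_
  have : ∀ f, tn ι f h = tensL (sumSplit (idx ι)) (sumSplit_mp (idx ι)) h f := fun f => rfl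
  have h1 := hT.apply_tn f h
  rw [this, this] at h1
  rw [this, this]
  simp [h1]

lemma IsLift.norm_le {k N : ℕ} {O : HS k →L[ℂ] HS k} (hO : IsSelfAdjoint O)
    {ι : Fin k ↪ Fin N} {T : HS N →L[ℂ] HS N} (hT : IsLift k N O ι T) : ‖T‖ ≤ ‖O‖ :=
  norm_lift_le (sumSplit (idx ι)) (sumSplit_mp (idx ι)) hO hT.apply_tn

/-- Lifting in stages: the lift along `κ ∘ ι` acts on the `M`-particle factor of
`f(x ∘ κ) h(x|rest)` as the lift along `ι` does. -/
lemma IsLift.trans_tn {k M N : ℕ} {A : HS k →L[ℂ] HS k} {ι : Fin k ↪ Fin M}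
    {κ : Fin M ↪ Fin N} {S : HS M →L[ℂ] HS M} {S' : HS N →L[ℂ] HS N}
    (hS : IsLift k M A ι S) (hS' : IsLift k N A (ι.trans κ) S') (f : HS M)
    (h : Lp ℂ 2 (volume : Measure ({j // j ∉ Set.range κ} → R3))) :
    S' (tn κ f h) = tn κ (S f) h := by
  set L := tensL (sumSplit (idx κ)) (sumSplit_mp (idx κ)) h with hL
  have key : S' ∘L L = L ∘L S := by
    refine ext_tens (sumSplit (idx ι)) (sumSplit_mp (idx ι)) fun f₁ g₁ => ?_
    change S' (tn κ (tn ι f₁ g₁) h) = tn κ (S (tn ι f₁ g₁)) h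
    rw [hS.apply_tn]
    have hcoe : ∀ f₂ : HS k, ⇑(tn κ (tn ι f₂ g₁) h) =ᵐ[volume] fun x =>
        f₂ (x ∘ (ι.trans κ)) * (g₁ (fun j => x (κ j)) * h (fun j => x j)) := by
      intro f₂
      filter_upwards [tn_coe κ (tn ι f₂ g₁) h, ae_comp_emb κ (tn_coe ι f₂ g₁)] with x h1 h2
      rw [h1, h2, mul_assoc]; rfl
    refine hS' f₁ _ _ _ ?_ (hcoe f₁) (hcoe (A f₁))
    intro x y hxy
    have e1 : (fun j : {j // j ∉ Set.range ι} => x (κ j)) =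
        fun j : {j // j ∉ Set.range ι} => y (κ j) := by
      funext j
      refine hxy _ ?_
      rintro ⟨i, hi⟩
      exact j.2 ⟨i, κ.injective hi⟩
    have e2 : (fun j : {j // j ∉ Set.range κ} => x j) =
        fun j : {j // j ∉ Set.range κ} => y j := by
      funext j
      refine hxy _ ?_
      rintro ⟨i, hi⟩
      exact j.2 ⟨ι i, hi⟩
    simp only [e1, e2]
  exact congrArg (fun X : HS M →L[ℂ] HS N => X f) key

lemma perm_mp {N : ℕ} (σ : Equiv.Perm (Fin N)) :
    MeasurePreserving (fun x : Fin N → R3 => x ∘ σ) volume volume :=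
  (volume_measurePreserving_piCongrLeft (fun _ : Fin N => R3) σ).symm

/-- The isometry `F ↦ F(· ∘ σ)` permuting the particles. -/
def permU {N : ℕ} (σ : Equiv.Perm (Fin N)) : HS N →ₗᵢ[ℂ] HS N :=
  Lp.compMeasurePreservingₗᵢ ℂ (fun x : Fin N → R3 => x ∘ σ) (perm_mp σ)

lemma permU_coe {N : ℕ} (σ : Equiv.Perm (Fin N)) (F : HS N) :
    ⇑(permU σ F) =ᵐ[volume] fun x => F (x ∘ σ) :=
  Lp.coeFn_compMeasurePreserving F (perm_mp σ)

/-- Permutations intertwine the lifts along `ι` and `σ ∘ ι`. -/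
lemma IsLift.apply_permU {k N : ℕ} {A : HS k →L[ℂ] HS k} {ι ι' : Fin k ↪ Fin N}
    {S S' : HS N →L[ℂ] HS N} (hS : IsLift k N A ι S) (hS' : IsLift k N A ι' S')
    (σ : Equiv.Perm (Fin N)) (hσ : ∀ i, ι' i = σ (ι i)) (F : HS N) :
    S' (permU σ F) = permU σ (S F) := by
  have key : S' ∘L (permU σ).toContinuousLinearMap =
      (permU σ).toContinuousLinearMap ∘L S := by
    refine ext_tens (sumSplit (idx ι)) (sumSplit_mp (idx ι)) fun f g => ?_
    change S' (permU σ (tn ι f g)) = permU σ (S (tn ι f g))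
    rw [hS.apply_tn]
    have hcoe : ∀ f₂ : HS k, ⇑(permU σ (tn ι f₂ g)) =ᵐ[volume] fun x =>
        f₂ (x ∘ ι') * g (fun j => x (σ j)) := by
      intro f₂
      filter_upwards [permU_coe σ (tn ι f₂ g),
        (perm_mp σ).quasiMeasurePreserving.ae (tn_coe ι f₂ g)] with x h1 h2
      rw [h1, h2]
      have : x ∘ ι' = (x ∘ σ) ∘ ι := by funext i; simp [hσ]
      rw [this]; rfl
    refine hS' f _ _ _ ?_ (hcoe f) (hcoe (A f))
    intro x y hxy
    have e1 : (fun j : {j // j ∉ Set.range ι} => x (σ j)) =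
        fun j : {j // j ∉ Set.range ι} => y (σ j) := by
      funext j
      refine hxy _ ?_
      rintro ⟨i, hi⟩
      rw [hσ] at hi
      exact j.2 ⟨i, σ.injective hi⟩
    simp only [e1]
  exact congrArg (fun X : HS N →L[ℂ] HS N => X F) key

lemma inner_tensorPow {m : ℕ} {φ : OneH} (hφ : ‖φ‖ = 1) {Φ : HS m} (hΦ : IsTensorPow m φ Φ) :
    ⟪Φ, Φ⟫ = 1 := by
  have h1 : ⟪φ, φ⟫ = 1 := by rw [inner_self_eq_norm_sq_to_K, hφ]; simp
  rw [L2.inner_def] at h1 ⊢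
  have : ∫ x : Fin m → R3, ⟪Φ x, Φ x⟫ = ∫ x : Fin m → R3, ∏ j, ⟪φ (x j), φ (x j)⟫ := by
    refine integral_congr_ae ?_
    filter_upwards [hΦ] with x hx
    rw [hx]
    simp only [RCLike.inner_apply, map_prod, Finset.prod_mul_distrib]
  rw [this, integral_fintype_prod_volume_eq_pow (fun y : R3 => ⟪φ y, φ y⟫), h1, one_pow]

/-- In the pure condensate the two commuting lifts of a centred operator `A` are uncorrelated:
`⟨φ^{⊗2k}, (A ⊗ A) φ^{⊗2k}⟩ = ⟨φ^{⊗k}, A φ^{⊗k}⟩² = 0`. -/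
lemma condensate_zero {k : ℕ} {φ : OneH} {Φ : HS k} {Φ₂ : HS (k + k)}
    (hΦ : IsTensorPow k φ Φ) (hΦ₂ : IsTensorPow (k + k) φ Φ₂)
    {A : HS k →L[ℂ] HS k} (hA : ⟪Φ, A Φ⟫ = 0) {S₁ S₂ : HS (k + k) →L[ℂ] HS (k + k)}
    (h₁ : IsLift k (k + k) A (Fin.castAddEmb k) S₁)
    (h₂ : IsLift k (k + k) A (Fin.natAddEmb k) S₂) :
    ⟪Φ₂, S₁ (S₂ Φ₂)⟫ = 0 := by
  set e := sumSplit (finSumFinEquiv (m := k) (n := k)) with he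
  have hmp : MeasurePreserving e volume _ := sumSplit_mp (finSumFinEquiv (m := k) (n := k))
  have hcoe : ∀ f g : HS k, ⇑(tens e hmp f g) =ᵐ[volume] fun x =>
      f (x ∘ Fin.castAddEmb k) * g (x ∘ Fin.natAddEmb k) := fun f g => tens_coe e hmp f g
  have hne : ∀ i j : Fin k, Fin.castAdd k i ≠ Fin.natAdd k j := by
    intro i j h
    have := congrArg Fin.val h
    simp at this
    omega
  have a1 : ∀ f g, S₁ (tens e hmp f g) = tens e hmp (A f) g := by
    intro f g
    refine h₁ f (fun x => g (x ∘ Fin.natAddEmb k)) _ _ ?_ (hcoe f g) (hcoe _ g)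
    intro x y hxy
    have : x ∘ Fin.natAddEmb k = y ∘ Fin.natAddEmb k := by
      funext j
      refine hxy _ ?_
      rintro ⟨i, hi⟩
      exact hne i j hi
    simp only [this]
  have a2 : ∀ f g, S₂ (tens e hmp f g) = tens e hmp f (A g) := by
    intro f g
    refine h₂ g (fun x => f (x ∘ Fin.castAddEmb k)) _ _ ?_ ?_ ?_
    · intro x y hxy
      have : x ∘ Fin.castAddEmb k = y ∘ Fin.castAddEmb k := by
        funext j
        refine hxy _ ?_
        rintro ⟨i, hi⟩
        exact hne j i hi.symm
      simp only [this]
    · filter_upwards [hcoe f g] with x hx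
      rw [hx, mul_comm]
    · filter_upwards [hcoe f (A g)] with x hx
      rw [hx, mul_comm]
  have hΦ' : Φ₂ = tens e hmp Φ Φ := by
    apply Lp.ext
    filter_upwards [hΦ₂, hcoe Φ Φ, ae_fst e hΦ hmp, ae_snd e hΦ hmp] with x b1 b2 b3 b4
    rw [b1, b2, Fin.prod_univ_add]
    exact congrArg₂ (· * ·) b3.symm b4.symm
  rw [hΦ', a2, a1, inner_tens, hA, zero_mul]

lemma exists_perm {M N : ℕ} (κ κ' : Fin M ↪ Fin N) :
    ∃ σ : Equiv.Perm (Fin N), ∀ i, κ' i = σ (κ i) := by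
  classical
  let e : {x // x ∈ Set.range κ} ≃ {x // x ∈ Set.range κ'} :=
    (Equiv.ofInjective κ κ.injective).symm.trans (Equiv.ofInjective κ' κ'.injective)
  refine ⟨e.extendSubtype, fun i => ?_⟩
  rw [Equiv.extendSubtype_apply_of_mem e (κ i) ⟨i, rfl⟩]
  simp only [e, Equiv.trans_apply]
  have : (Equiv.ofInjective κ κ.injective).symm ⟨κ i, ⟨i, rfl⟩⟩ = i :=
    Equiv.ofInjective_symm_apply κ.injective i
  rw [this]; rfl

/-! ### Counting pairs of injections -/

/-- Among injections `Fin k ↪ Fin N` each value is taken at `p` equally often. -/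
lemma card_fiber {k N : ℕ} (p : Fin k) (y : Fin N) :
    (N : ℝ) * ∑ ι : Fin k ↪ Fin N, (if ι p = y then (1 : ℝ) else 0) =
      Fintype.card (Fin k ↪ Fin N) := by
  have hs : ∀ y' : Fin N, ∑ ι : Fin k ↪ Fin N, (if ι p = y' then (1 : ℝ) else 0) =
      ∑ ι : Fin k ↪ Fin N, (if ι p = y then (1 : ℝ) else 0) := by
    intro y'
    refine Fintype.sum_equiv (Equiv.embeddingCongr (Equiv.refl _) (Equiv.swap y y')) _ _ ?_
    intro ι
    have : (Equiv.embeddingCongr (Equiv.refl (Fin k)) (Equiv.swap y y')) ι p =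
      Equiv.swap y y' (ι p) := rfl
    rw [this]
    have h2 : Equiv.swap y y' (ι p) = y ↔ ι p = y' := by
      rw [← Equiv.eq_symm_apply]; simp
    simp only [h2]
  have h1 : ∑ y' : Fin N, ∑ ι : Fin k ↪ Fin N, (if ι p = y' then (1 : ℝ) else 0) =
      Fintype.card (Fin k ↪ Fin N) := by
    rw [Finset.sum_comm]; simp
  rw [← h1, Finset.sum_congr rfl fun y' _ => hs y']
  simp

/-- A coincidence `ι p = ι' q` occurs for a fraction `1 / N` of all pairs of injections. -/
lemma card_overlap {k N : ℕ} (p q : Fin k) :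
    (N : ℝ) * ∑ ι : Fin k ↪ Fin N, ∑ ι' : Fin k ↪ Fin N, (if ι p = ι' q then (1 : ℝ) else 0) =
      (Fintype.card (Fin k ↪ Fin N) : ℝ) ^ 2 := by
  rw [Finset.sum_comm, Finset.mul_sum, Finset.sum_congr rfl fun ι' _ => card_fiber p (ι' q)]
  simp [sq]

end Concrete

/-! ### Second moment and conclusion -/

/-- Chebyshev's inequality for a compactly supported law, with the second moment. -/
lemma chebyshev {μ : Measure ℝ} [IsProbabilityMeasure μ] (hR : ∃ R : ℝ, μ {x : ℝ | R < |x|} = 0)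
    {δ : ℝ} (hδ : 0 < δ) :
    (μ {x : ℝ | δ < |x|}).toReal ≤ (δ ^ 2)⁻¹ * ∫ x, x ^ 2 ∂μ := by
  obtain ⟨R, hR⟩ := hR
  have hae : ∀ᵐ x ∂μ, |x| ≤ R := by
    rw [ae_iff]; simpa using hR
  have hint : Integrable (fun x : ℝ => x ^ 2) μ := by
    refine Integrable.of_bound (by fun_prop) (R ^ 2) ?_
    filter_upwards [hae] with x hx
    rw [norm_pow, Real.norm_eq_abs]
    gcongr
  have h1 := mul_meas_ge_le_integral_of_nonneg (ae_of_all _ fun x : ℝ => sq_nonneg x) hint (δ ^ 2)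
  have h2 : (μ {x : ℝ | δ < |x|}).toReal ≤ μ.real {x : ℝ | δ ^ 2 ≤ x ^ 2} := by
    refine measureReal_mono ?_
    intro x hx
    have hx : δ < |x| := hx
    change δ ^ 2 ≤ x ^ 2
    rw [← sq_abs x]
    gcongr
  rw [inv_mul_eq_div, le_div_iff₀ (by positivity), mul_comm]
  exact (mul_le_mul_of_nonneg_left h2 (by positivity)).trans h1

/-- Second moment of an average over injections: pairs with disjoint ranges contribute at most
`d` each; all other pairs have a coincidence `ι p = ι' q`, contribute at most `K ^ 2` each, and
are only a fraction `O(1 / N)` of all pairs. -/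
lemma second_moment {k N : ℕ} (hN : 0 < N) {H : Type*} [NormedAddCommGroup H]
    [InnerProductSpace ℂ H] (AL : (Fin k ↪ Fin N) → H →L[ℂ] H) (ψ : H) (d K : ℝ)
    (hd0 : 0 ≤ d)
    (hd : ∀ ι ι' : Fin k ↪ Fin N, (∀ p q, ι p ≠ ι' q) → ‖⟪ψ, AL ι (AL ι' ψ)⟫‖ ≤ d)
    (hK : ∀ ι ι' : Fin k ↪ Fin N, ‖⟪ψ, AL ι (AL ι' ψ)⟫‖ ≤ K ^ 2) (a : ℂ) :
    ‖⟪ψ, ((a • ∑ ι, AL ι) ^ 2) ψ⟫‖ ≤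
      ‖a‖ ^ 2 * (Fintype.card (Fin k ↪ Fin N) : ℝ) ^ 2 * (d + k ^ 2 * K ^ 2 / N) := by
  have hN' : (0 : ℝ) < N := by exact_mod_cast hN
  have h1 : ⟪ψ, ((a • ∑ ι, AL ι) ^ 2) ψ⟫ = a ^ 2 * ∑ ι, ∑ ι', ⟪ψ, AL ι (AL ι' ψ)⟫ := by
    rw [pow_two, mul_apply_eq_comp]
    simp only [smul_apply, sum_apply, map_smul, map_sum,
      inner_smul_right, inner_sum]
    rw [← Finset.mul_sum, Finset.sum_comm, ← mul_assoc, ← sq]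
  have h2 : ∀ ι ι' : Fin k ↪ Fin N, ‖⟪ψ, AL ι (AL ι' ψ)⟫‖ ≤
      d + ∑ p, ∑ q, K ^ 2 * (if ι p = ι' q then (1 : ℝ) else 0) := by
    intro ι ι'
    have hnn : ∀ p q, 0 ≤ K ^ 2 * (if ι p = ι' q then (1 : ℝ) else 0) := by
      intro p q; split_ifs <;> positivity
    by_cases hdis : ∀ p q, ι p ≠ ι' q
    · have := Finset.sum_nonneg fun p (_ : p ∈ Finset.univ) =>
        Finset.sum_nonneg fun q (_ : q ∈ Finset.univ) => hnn p q
      linarith [hd ι ι' hdis]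
    · push Not at hdis
      obtain ⟨p, q, hpq⟩ := hdis
      have h3 : K ^ 2 * (if ι p = ι' q then (1 : ℝ) else 0) ≤
          ∑ q, K ^ 2 * (if ι p = ι' q then (1 : ℝ) else 0) :=
        Finset.single_le_sum (f := fun q => K ^ 2 * (if ι p = ι' q then (1 : ℝ) else 0))
          (fun q _ => hnn p q) (Finset.mem_univ q)
      have h4 : ∑ q, K ^ 2 * (if ι p = ι' q then (1 : ℝ) else 0) ≤
          ∑ p, ∑ q, K ^ 2 * (if ι p = ι' q then (1 : ℝ) else 0) :=
        Finset.single_le_sum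
          (f := fun p => ∑ q, K ^ 2 * (if ι p = ι' q then (1 : ℝ) else 0))
          (fun p _ => Finset.sum_nonneg fun q _ => hnn p q) (Finset.mem_univ p)
      rw [if_pos hpq, mul_one] at h3
      linarith [hK ι ι']
  set D : ℝ := (Fintype.card (Fin k ↪ Fin N) : ℝ) with hD
  have h5 : ∑ ι : Fin k ↪ Fin N, ∑ ι' : Fin k ↪ Fin N,
      (d + ∑ p, ∑ q, K ^ 2 * (if ι p = ι' q then (1 : ℝ) else 0)) =
      D ^ 2 * (d + k ^ 2 * K ^ 2 / N) := by
    have h6 : ∀ p q : Fin k, ∑ ι : Fin k ↪ Fin N, ∑ ι' : Fin k ↪ Fin N,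
        K ^ 2 * (if ι p = ι' q then (1 : ℝ) else 0) = K ^ 2 * D ^ 2 / N := by
      intro p q
      rw [eq_div_iff hN'.ne', hD, ← card_overlap p q]
      simp only [← Finset.mul_sum]
      ring
    have h7 : ∑ ι : Fin k ↪ Fin N, ∑ ι' : Fin k ↪ Fin N,
        ∑ p, ∑ q, K ^ 2 * (if ι p = ι' q then (1 : ℝ) else 0) =
        ∑ p : Fin k, ∑ q : Fin k, K ^ 2 * D ^ 2 / N := by
      rw [← Finset.sum_congr rfl fun p _ => Finset.sum_congr rfl fun q _ => h6 p q]
      rw [Finset.sum_congr rfl fun ι _ => Finset.sum_comm, Finset.sum_comm]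
      refine Finset.sum_congr rfl fun p _ => ?_
      rw [Finset.sum_congr rfl fun ι _ => Finset.sum_comm, Finset.sum_comm]
    simp only [Finset.sum_add_distrib]
    rw [h7]
    simp only [Finset.sum_const, Finset.card_univ, Fintype.card_fin, nsmul_eq_mul, ← hD]
    ring
  rw [h1, norm_mul, norm_pow, mul_assoc]
  gcongr
  rw [← h5]
  refine (norm_sum_le _ _).trans (Finset.sum_le_sum fun ι _ => ?_)
  exact (norm_sum_le _ _).trans (Finset.sum_le_sum fun ι' _ => h2 ι ι')

/-- **Law of large numbers for `k`-particle observables.**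
If the normalized symmetric states `ψ_N` exhibit complete Bose–Einstein condensation in `φ`
(expectations of all lifted bounded `ℓ`-particle operators converge to their condensate values),
then for every `δ > 0` the spectral probability
`⟨ψ_N, χ_{(δ,∞)}(|binom(N,k)⁻¹ ∑_{i_k} (O_{i_k} - ⟨φ^{⊗k}, O φ^{⊗k}⟩)|) ψ_N⟩`
tends to `0`.  The spectral probability is encoded through the (unique) compactly supported
Borel probability measure `μ N` on `ℝ` whose moments are `⟨ψ_N, (T_N)^n ψ_N⟩`, i.e. the
distribution of the bounded self-adjoint operator `T_N` in the state `ψ_N`. -/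
theorem law_of_large_numbers
    (k : ℕ) (hk : 0 < k)
    (O : HS k →L[ℂ] HS k) (hO : IsSelfAdjoint O)
    (φ : OneH) (hφ : ‖φ‖ = 1)
    (Φ : ∀ m : ℕ, HS m) (hΦ : ∀ m, IsTensorPow m φ (Φ m))
    (ψ : ∀ N : ℕ, HS N)
    (hψnorm : ∀ N, k ≤ N → ‖ψ N‖ = 1)
    (hψsym : ∀ N, k ≤ N → ∀ σ : Equiv.Perm (Fin N),
      ∀ᵐ x : Fin N → R3 ∂volume, ψ N (x ∘ σ) = ψ N x)
    -- complete Bose–Einstein condensation in the state `φ`: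
    (hBEC : ∀ (ℓ : ℕ), 0 < ℓ → ∀ (B : HS ℓ →L[ℂ] HS ℓ)
      (Blift : ∀ N : ℕ, HS N →L[ℂ] HS N),
      (∀ N (h : ℓ ≤ N), IsLift ℓ N B (Fin.castLE h) (Blift N)) →
      Tendsto (fun N => ⟪ψ N, Blift N (ψ N)⟫) atTop (nhds ⟪Φ ℓ, B (Φ ℓ)⟫))
    -- the lifted operators `O_{i_k}`, indexed by injections `ι : Fin k ↪ Fin N`:
    (Olift : ∀ N : ℕ, (Fin k ↪ Fin N) → (HS N →L[ℂ] HS N))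
    (hOlift : ∀ N, k ≤ N → ∀ ι : Fin k ↪ Fin N, IsLift k N O (⇑ι) (Olift N ι))
    -- the centred averaged sum `T N = binom(N,k)⁻¹ ∑_{i_k ∈ I_N^{(k)}} (O_{i_k} - ⟨φ^{⊗k}, O φ^{⊗k}⟩)`:
    (T : ∀ N : ℕ, HS N →L[ℂ] HS N)
    (hT : ∀ N, T N = (N.choose k : ℂ)⁻¹ •
      ∑ ι : Fin k ↪ Fin N, (Olift N ι - ⟪Φ k, O (Φ k)⟫ • (1 : HS N →L[ℂ] HS N)))
    (δ : ℝ) (hδ : 0 < δ)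
    -- `μ N` is the spectral probability distribution of `T N` in the state `ψ N`:
    (μ : ℕ → Measure ℝ)
    (hμprob : ∀ N, IsProbabilityMeasure (μ N))
    (hμsupp : ∀ N, k ≤ N → ∃ R : ℝ, μ N {x : ℝ | R < |x|} = 0)
    (hμmom : ∀ N, k ≤ N → ∀ n : ℕ,
      ∫ x, x ^ n ∂(μ N) = (⟪ψ N, ((T N) ^ n) (ψ N)⟫).re) :
    Tendsto (fun N => (μ N {x : ℝ | δ < |x|}).toReal) atTop (nhds 0) := by
  set c : ℂ := ⟪Φ k, O (Φ k)⟫ with hc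
  set AL : ∀ N : ℕ, (Fin k ↪ Fin N) → (HS N →L[ℂ] HS N) := fun N ι => Olift N ι - c • 1 with hAL
  have hALlift : ∀ N, k ≤ N → ∀ ι : Fin k ↪ Fin N, IsLift k N (O - c • 1) ι (AL N ι) :=
    fun N hN ι => (hOlift N hN ι).sub_smul c
  set K : ℝ := ‖O‖ + ‖c‖ with hK
  have hK0 : 0 ≤ K := by positivity
  have hALnorm : ∀ N, k ≤ N → ∀ ι : Fin k ↪ Fin N, ∀ F, ‖AL N ι F‖ ≤ K * ‖F‖ := by
    intro N hN ι F
    have h1 : AL N ι F = Olift N ι F - c • F := by simp [hAL]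
    rw [h1]
    calc _ ≤ ‖Olift N ι F‖ + ‖c • F‖ := norm_sub_le _ _
      _ ≤ ‖O‖ * ‖F‖ + ‖c‖ * ‖F‖ := by
        rw [norm_smul]
        gcongr
        exact (Olift N ι).le_of_opNorm_le ((hOlift N hN ι).norm_le hO) F
      _ = _ := by ring
  have hcentred : ⟪Φ k, (O - c • (1 : HS k →L[ℂ] HS k)) (Φ k)⟫ = 0 := by
    have h1 : (O - c • (1 : HS k →L[ℂ] HS k)) (Φ k) = O (Φ k) - c • Φ k := by simp
    rw [h1, inner_sub_right, inner_smul_right, inner_tensorPow hφ (hΦ k), mul_one, sub_self]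
  -- `B` is the operator `A ⊗ A` on `2k` particles, `Bl N` its lift to the first `2k` of `N`.
  set B : HS (k + k) →L[ℂ] HS (k + k) :=
    AL (k + k) (Fin.castAddEmb k) ∘L AL (k + k) (Fin.natAddEmb k) with hB
  set Bl : ∀ N : ℕ, HS N →L[ℂ] HS N := fun N =>
    if h : k + k ≤ N then
      AL N ((Fin.castAddEmb k).trans (Fin.castLEEmb h)) ∘L
        AL N ((Fin.natAddEmb k).trans (Fin.castLEEmb h))
    else 0 with hBl
  have hk2 : k ≤ k + k := Nat.le_add_left k k
  have hlim := hBEC (k + k) (by omega) B Bl (by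
    intro N h
    have hkN : k ≤ N := by omega
    refine isLift_of_tn (ι := Fin.castLEEmb h) fun f g => ?_
    simp only [hBl, dif_pos h, hB, ContinuousLinearMap.comp_apply]
    rw [(hALlift _ hk2 _).trans_tn (hALlift N hkN _),
      (hALlift _ hk2 _).trans_tn (hALlift N hkN _)])
  have hzero : ⟪Φ (k + k), B (Φ (k + k))⟫ = 0 :=
    condensate_zero (hΦ k) (hΦ (k + k)) hcentred (hALlift _ hk2 _) (hALlift _ hk2 _)
  rw [hzero] at hlim
  have hbound : ∀ N, k + k ≤ N → (μ N {x : ℝ | δ < |x|}).toReal ≤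
      (δ ^ 2)⁻¹ * ((k.factorial : ℝ) ^ 2 * (‖⟪ψ N, Bl N (ψ N)⟫‖ + k ^ 2 * K ^ 2 / N)) := by
    intro N hN
    have hkN : k ≤ N := by omega
    have hprob := hμprob N
    refine (chebyshev (hμsupp N hkN) hδ).trans ?_
    gcongr
    rw [hμmom N hkN 2, hT N]
    refine (Complex.re_le_norm _).trans ?_
    have hmain := second_moment (k := k) (N := N) (by omega) (AL N) (ψ N)
      ‖⟪ψ N, Bl N (ψ N)⟫‖ K (norm_nonneg _) ?_ ?_ (N.choose k : ℂ)⁻¹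
    · refine hmain.trans (le_of_eq ?_)
      congr 1
      have hch : (N.choose k : ℝ) ≠ 0 := by exact_mod_cast (Nat.choose_pos hkN).ne'
      rw [Fintype.card_embedding_eq, Fintype.card_fin, Fintype.card_fin,
        Nat.descFactorial_eq_factorial_mul_choose, norm_inv, Complex.norm_natCast]
      push_cast
      field_simp
    · intro ι ι' hdis
      -- A disjoint pair is a permutation of the standard one, and `ψ N` is symmetric.
      set κ : Fin (k + k) ↪ Fin N := ⟨Fin.append ι ι',
        Fin.append_injective_iff.2 ⟨ι.injective, ι'.injective, hdis⟩⟩ with hκ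
      obtain ⟨σ, hσ⟩ := exists_perm (Fin.castLEEmb hN) κ
      have hψσ : permU σ (ψ N) = ψ N := by
        apply Lp.ext
        filter_upwards [permU_coe σ (ψ N), hψsym N hkN σ] with x h1 h2
        rw [h1, h2]
      have e1 : ∀ i, ι i = σ (((Fin.castAddEmb k).trans (Fin.castLEEmb hN)) i) := by
        intro i
        have := hσ (Fin.castAdd k i)
        rw [← show κ (Fin.castAdd k i) = ι i from Fin.append_left ι ι' i, this]; rfl
      have e2 : ∀ i, ι' i = σ (((Fin.natAddEmb k).trans (Fin.castLEEmb hN)) i) := by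
        intro i
        have := hσ (Fin.natAdd k i)
        rw [← show κ (Fin.natAdd k i) = ι' i from Fin.append_right ι ι' i, this]; rfl
      have heq : ⟪ψ N, AL N ι (AL N ι' (ψ N))⟫ = ⟪ψ N, Bl N (ψ N)⟫ := by
        conv_lhs => rw [← hψσ]
        rw [(hALlift N hkN _).apply_permU (hALlift N hkN ι') σ e2,
          (hALlift N hkN _).apply_permU (hALlift N hkN ι) σ e1, LinearIsometry.inner_map_map]
        simp only [hBl, dif_pos hN, ContinuousLinearMap.comp_apply]
      rw [heq]
    · intro ι ι'
      calc _ ≤ ‖ψ N‖ * ‖AL N ι (AL N ι' (ψ N))‖ := norm_inner_le_norm _ _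
        _ ≤ ‖ψ N‖ * (K * (K * ‖ψ N‖)) := by
          gcongr
          refine (hALnorm N hkN ι _).trans ?_
          gcongr
          exact hALnorm N hkN ι' _
        _ = K ^ 2 := by rw [hψnorm N hkN]; ring
  have hlim2 : Tendsto (fun N : ℕ => (δ ^ 2)⁻¹ * ((k.factorial : ℝ) ^ 2 *
      (‖⟪ψ N, Bl N (ψ N)⟫‖ + k ^ 2 * K ^ 2 / N))) atTop (nhds 0) := by
    have h1 := (hlim.norm.add (tendsto_const_div_atTop_nhds_zero_nat ((k : ℝ) ^ 2 * K ^ 2)))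
    have h2 := (h1.const_mul ((k.factorial : ℝ) ^ 2)).const_mul (δ ^ 2)⁻¹
    simpa using h2
  refine tendsto_of_tendsto_of_tendsto_of_le_of_le' tendsto_const_nhds hlim2
    (Eventually.of_forall fun N => ENNReal.toReal_nonneg) ?_
  filter_upwards [eventually_ge_atTop (k + k)] with N hN using hbound N hN

end
end

section
/- Let k be a positive integer, let O be a bounded self-adjoint operator on L²(ℝ^{3k}), and let φ ∈ L²(ℝ³) with ‖φ‖ = 1. For N ≥ 2k, let σ_N² := ⟨φ^{⊗N}, (O_N^{(k)})² φ^{⊗N}⟩ − ⟨φ^{⊗N}, O_N^{(k)} φ^{⊗N}⟩² be the variance of O_N^{(k)} = Σ_{i_k ∈ I_N^{(k)}} O_{i_k} in the factorized state φ^{⊗N}. Then the variance is of order N^{2k−1}, with limit given by the contracted kernels: N^{−(2k−1)} σ_N² → Σ_{i,j=1}^{k} ⟨q h_i, q h_j⟩_{L²(ℝ³)} as N → ∞, where q = Id − |φ⟩⟨φ| is the orthogonal projection onto the orthogonal complement of φ. -/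
/-!
Put `W_ι = O_ι φ^{⊗N}`, the embedding of `O φ^{⊗k}` into the `N`-particle space along the index
tuple `ι`, completed by factors `φ`, and `a = ⟨φ^{⊗k}, O φ^{⊗k}⟩`, which is real. Since the lifts
`O_ι` are symmetric (`IsLift.inner_symm`), the variance is the double sum over pairs `(ι, ι')` of
`Re ⟨W_ι, W_ι'⟩ - a²`.

* If `ι` and `ι'` have no common value, `⟨W_ι, W_ι'⟩ = a²` and the pair contributes nothing
  (`inner_emb_disjoint`).
* If the only common value is `ι i = ι' j`, then `⟨W_ι, W_ι'⟩ = ⟨h_i, h_j⟩`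
  (`inner_emb_single`); as `⟨φ, h_i⟩ = a`, subtracting `a²` gives `⟨q h_i, q h_j⟩`.
* All terms are bounded uniformly in `N`, and at most `O(N^{2k-2})` pairs share two or more
  values (`card_double_overlap`).

For each `(i, j)` there are `(N)_k² / N ~ N^{2k-1}` pairs with `ι i = ι' j`
(`card_single_overlap`), which gives the limit (`tendsto_overlap_sum`).

The operator identities hold because elementary tensors are total in `L²((ℝ³)^m)`
(`eq_zero_of_inner_pureT`), so they need only be checked on elementary tensors, where every inner
product is a product of one-particle inner products.
-/

/- The limit of the rescaled variance in a factorized state is given by the contracted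
kernels. -/

open MeasureTheory Filter
open scoped ComplexInnerProductSpace

noncomputable section

/-- `h j` is the `j`-th contracted kernel of the `k`-particle operator `O` with respect to `φ`,
i.e. the Riesz representative of `g ↦ ⟨φ^{⊗(j-1)} ⊗ g ⊗ φ^{⊗(k-j)}, O φ^{⊗k}⟩`. -/
def IsContractedKernel (k : ℕ) (φ : OneH) (Φk : HS k) (O : HS k →L[ℂ] HS k)
    (j : Fin k) (hj : OneH) : Prop :=
  ∀ (g : OneH) (G : HS k),
    (⇑G =ᵐ[volume] fun x : Fin k → R3 => g (x j) * ∏ i ∈ Finset.univ.erase j, φ (x i)) →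
    ⟪g, hj⟫ = ⟪G, O Φk⟫

/-! ### Elementary tensors -/

theorem ae_comp_eval {m : ℕ} (i : Fin m) {f g : R3 → ℂ} (hfg : f =ᵐ[volume] g) :
    (fun x : Fin m → R3 => f (x i)) =ᵐ[volume] fun x => g (x i) :=
  (Measure.quasiMeasurePreserving_eval (fun _ : Fin m => (volume : Measure R3)) i).ae_eq_comp hfg

theorem memLp_prod {α : Type*} [Fintype α] (ψ : α → OneH) :
    MemLp (fun x : α → R3 => ∏ j, ψ j (x j)) 2 volume := by
  have hm : AEStronglyMeasurable (fun x : α → R3 => ∏ j, ψ j (x j)) volume := by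
    refine Finset.aestronglyMeasurable_fun_prod _ fun j _ => ?_
    exact (Lp.aestronglyMeasurable (ψ j)).comp_quasiMeasurePreserving
      (Measure.quasiMeasurePreserving_eval (fun _ : α => (volume : Measure R3)) j)
  rw [memLp_two_iff_integrable_sq_norm hm]
  have h : ∀ j, Integrable (fun y => ‖ψ j y‖ ^ 2) (volume : Measure R3) := fun j =>
    (memLp_two_iff_integrable_sq_norm (Lp.aestronglyMeasurable _)).1 (Lp.memLp (ψ j))
  have := Integrable.fintype_prod (μ := fun _ : α => (volume : Measure R3)) h
  rw [volume_pi]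
  simpa only [norm_prod, Finset.prod_pow] using this

/-- The elementary tensor `⊗_j ψ_j ∈ L²((ℝ³)^m)`, i.e. `x ↦ ∏_j ψ_j(x_j)`. -/
def pureT {m : ℕ} (ψ : Fin m → OneH) : HS m := (memLp_prod ψ).toLp _

theorem coe_pureT {m : ℕ} (ψ : Fin m → OneH) :
    ⇑(pureT ψ) =ᵐ[volume] fun x => ∏ j, ψ j (x j) := MemLp.coeFn_toLp _

theorem inner_pureT {m : ℕ} (ψ χ : Fin m → OneH) :
    ⟪pureT ψ, pureT χ⟫ = ∏ j, ⟪ψ j, χ j⟫ := by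
  simp only [L2.inner_def, ← integral_fintype_prod_volume_eq_prod]
  refine integral_congr_ae ?_
  filter_upwards [coe_pureT ψ, coe_pureT χ] with x h1 h2
  simp [h1, h2, RCLike.inner_apply, Finset.prod_mul_distrib]

/-- Elementary tensors are total: the boxes `∏_j S_j` are a π-system generating the Borel
sets, and indicators of bounded boxes are elementary tensors. -/
theorem eq_zero_of_inner_pureT {m : ℕ} (Ψ : HS m)
    (h : ∀ ψ : Fin m → OneH, ⟪pureT ψ, Ψ⟫ = 0) : Ψ = 0 := by
  set B : ℕ → Set (Fin m → R3) := fun n => Set.univ.pi fun _ => Metric.closedBall 0 n with hB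
  have hBm : ∀ n, MeasurableSet (B n) := fun n =>
    MeasurableSet.univ_pi fun _ => measurableSet_closedBall
  have hBf : ∀ n, volume (B n) ≠ ⊤ := fun n => by
    rw [hB, volume_pi_pi]
    exact ENNReal.prod_ne_top fun _ _ => measure_closedBall_lt_top.ne
  have hint : ∀ n, IntegrableOn Ψ (B n) volume := fun n =>
    integrableOn_Lp_of_measure_ne_top Ψ (by norm_num) (hBf n)
  -- integrals over bounded boxes vanish
  have hbox : ∀ S : Fin m → Set R3, (∀ i, MeasurableSet (S i)) → (∀ i, volume (S i) ≠ ⊤) →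
      ∫ x in Set.univ.pi S, Ψ x = 0 := by
    intro S hS hSf
    have hSf' : volume (Set.univ.pi S) ≠ ⊤ := by
      rw [volume_pi_pi]; exact ENNReal.prod_ne_top fun i _ => hSf i
    have hSm : MeasurableSet (Set.univ.pi S) := MeasurableSet.univ_pi hS
    rw [← L2.inner_indicatorConstLp_one (𝕜 := ℂ) hSm hSf' Ψ,
      ← h fun i => indicatorConstLp 2 (hS i) (hSf i) 1]
    congr 1
    apply Lp.ext
    have : ∀ᵐ x : Fin m → R3, ∀ i, indicatorConstLp 2 (hS i) (hSf i) (1 : ℂ) (x i)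
        = (S i).indicator (fun _ => (1 : ℂ)) (x i) :=
      ae_all_iff.2 fun i => ae_comp_eval i indicatorConstLp_coeFn
    filter_upwards [this, coe_pureT fun i => indicatorConstLp 2 (hS i) (hSf i) (1 : ℂ),
      indicatorConstLp_coeFn (p := 2) (hs := hSm) (hμs := hSf') (c := (1 : ℂ))] with x h1 h2 h3
    rw [h2, h3]
    simp only [h1]
    by_cases hx : x ∈ Set.univ.pi S
    · rw [Set.indicator_of_mem hx]
      exact (Finset.prod_eq_one fun i _ => Set.indicator_of_mem (hx i trivial) _).symm
    · rw [Set.indicator_of_notMem hx]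
      simp only [Set.mem_univ_pi, not_forall] at hx
      obtain ⟨i, hi⟩ := hx
      exact (Finset.prod_eq_zero (Finset.mem_univ i) (by simp [hi])).symm
  have key : ∀ n, ∀ A : Set (Fin m → R3), MeasurableSet A → ∫ x in A ∩ B n, Ψ x = 0 := by
    intro n A hA
    refine MeasurableSpace.induction_on_inter (C := fun A _ => ∫ x in A ∩ B n, Ψ x = 0)
      generateFrom_pi.symm isPiSystem_pi ?_ ?_ ?_ ?_ A hA
    · simp
    · intro t ht
      obtain ⟨S, hS, rfl⟩ := ht
      rw [hB, ← Set.pi_inter_distrib]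
      refine hbox _ (fun i => MeasurableSet.inter (show MeasurableSet (S i) from hS i trivial)
        measurableSet_closedBall) fun i => ?_
      exact (measure_mono_top Set.inter_subset_right).mt measure_closedBall_lt_top.ne
    · intro t ht ih
      have h0 : ∫ x in B n, Ψ x = 0 :=
        hbox _ (fun _ => measurableSet_closedBall) fun _ => measure_closedBall_lt_top.ne
      have h1 := integral_inter_add_sdiff ht (hint n)
      rw [Set.inter_comm, ih, h0, zero_add] at h1
      rwa [Set.inter_comm, ← Set.sdiff_eq]
    · intro f hd hf ih
      rw [Set.iUnion_inter, integral_iUnion (fun i => (hf i).inter (hBm n))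
        (fun i j hij => (hd hij).mono Set.inter_subset_left Set.inter_subset_left)
        ((hint n).mono_set (Set.iUnion_subset fun i => Set.inter_subset_right))]
      simp [ih]
  have hz : ∀ n, ∀ᵐ x ∂(volume.restrict (B n)), Ψ x = 0 := fun n => by
    refine (hint n).ae_eq_zero_of_forall_setIntegral_eq_zero fun s hs _ => ?_
    rw [Measure.restrict_restrict hs]
    exact key n s hs
  have hU : ⋃ n, B n = Set.univ := by
    refine Set.eq_univ_of_forall fun x => Set.mem_iUnion.2 ?_
    obtain ⟨n, hn⟩ := exists_nat_ge ‖x‖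
    refine ⟨n, fun i _ => ?_⟩
    simpa using (norm_le_pi_norm x i).trans hn
  have hall : ∀ᵐ x ∂(volume.restrict (⋃ n, B n)), Ψ x = 0 :=
    (ae_restrict_iUnion_iff _ _).2 hz
  rw [hU, Measure.restrict_univ] at hall
  exact (Lp.eq_zero_iff_ae_eq_zero).2 hall

/-- Bounded operators are determined by their matrix elements between elementary tensors. -/
theorem clm_eq_of_pureT {k : ℕ} {A B : HS k →L[ℂ] HS k}
    (h : ∀ f g : Fin k → OneH, ⟪pureT f, A (pureT g)⟫ = ⟪pureT f, B (pureT g)⟫) : A = B := by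
  have hd : Dense (Submodule.span ℂ (Set.range (pureT (m := k))) : Set (HS k)) := by
    rw [Submodule.dense_iff_topologicalClosure_eq_top, Submodule.topologicalClosure_eq_top_iff,
      Submodule.eq_bot_iff]
    intro Ψ hΨ
    refine eq_zero_of_inner_pureT Ψ fun ψ => ?_
    exact (Submodule.mem_orthogonal _ _).1 hΨ _ (Submodule.subset_span ⟨ψ, rfl⟩)
  refine ContinuousLinearMap.ext_on hd ?_
  rintro _ ⟨g, rfl⟩
  rw [← sub_eq_zero]
  refine eq_zero_of_inner_pureT _ fun f => ?_
  rw [inner_sub_right, h, sub_self]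

/-! ### Embedding `k`-particle vectors into the `N`-particle space -/

open Classical in
/-- Splitting `(ℝ³)^N` into the coordinates listed by `ι` and the remaining ones preserves
Lebesgue measure. -/
theorem split_measurePreserving {k N : ℕ} (ι : Fin k ↪ Fin N) :
    ∃ e : (Fin N → R3) ≃ᵐ (Fin k → R3) × ({n // n ∉ Set.range ι} → R3),
      MeasurePreserving e volume volume ∧
      ∀ x, e x = (x ∘ ι, fun r : {n // n ∉ Set.range ι} => x r) := by
  let e₀ : Fin k ⊕ {n // n ∉ Set.range ι} ≃ Fin N :=
    ((Equiv.ofInjective ι ι.injective).sumCongr (Equiv.refl _)).trans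
      (Equiv.sumCompl (· ∈ Set.range ι))
  have h1 := (volume_measurePreserving_piCongrLeft (fun _ : Fin N => R3) e₀).symm
  have h2 := volume_measurePreserving_sumPiEquivProdPi
    (fun _ : Fin k ⊕ {n // n ∉ Set.range ι} => R3)
  refine ⟨_, h1.trans h2, fun x => ?_⟩
  rfl

open Classical in
theorem split_quasi {k N : ℕ} (ι : Fin k ↪ Fin N) :
    Measure.QuasiMeasurePreserving (fun x : Fin N → R3 => x ∘ ι) volume volume := by
  obtain ⟨e, he, hx⟩ := split_measurePreserving ι
  have := Measure.quasiMeasurePreserving_fst.comp he.quasiMeasurePreserving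
  convert this using 2 with x
  simp [hx]

open Classical in
/-- The function `f(x ∘ ι) ∏_{n ∉ range ι} ψ_n(x_n)`; only the `ψ_n` with `n ∉ range ι` enter. -/
def embFun {k N : ℕ} (ι : Fin k ↪ Fin N) (ψ : Fin N → OneH) (f : (Fin k → R3) → ℂ)
    (x : Fin N → R3) : ℂ :=
  f (x ∘ ι) * ∏ r : {n // n ∉ Set.range ι}, ψ r (x r)

open Classical in
theorem memLp_embFun {k N : ℕ} (ι : Fin k ↪ Fin N) (ψ : Fin N → OneH) (f : HS k) :
    MemLp (embFun ι ψ f) 2 volume := by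
  obtain ⟨e, he, hx⟩ := split_measurePreserving ι
  have hg := memLp_prod fun r : {n // n ∉ Set.range ι} => ψ r
  have hf := Lp.memLp f
  have hm : AEStronglyMeasurable (fun z : (Fin k → R3) × ({n // n ∉ Set.range ι} → R3) =>
      f z.1 * ∏ r : {n // n ∉ Set.range ι}, ψ r (z.2 r)) volume :=
    hf.1.comp_fst.mul hg.1.comp_snd
  have : MemLp (fun z : (Fin k → R3) × ({n // n ∉ Set.range ι} → R3) =>
      f z.1 * ∏ r : {n // n ∉ Set.range ι}, ψ r (z.2 r)) 2 volume := by
    rw [memLp_two_iff_integrable_sq_norm hm]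
    have h1 := (memLp_two_iff_integrable_sq_norm hf.1).1 hf
    have h2 := (memLp_two_iff_integrable_sq_norm hg.1).1 hg
    rw [Measure.volume_eq_prod]
    simpa only [norm_mul, mul_pow] using h1.mul_prod h2
  have heq : embFun ι ψ f = (fun z : (Fin k → R3) × ({n // n ∉ Set.range ι} → R3) =>
      f z.1 * ∏ r : {n // n ∉ Set.range ι}, ψ r (z.2 r)) ∘ e := by
    funext x
    simp [hx, embFun]
  rw [heq]
  exact this.comp_measurePreserving he

open Classical in
/-- Fubini for the splitting of the coordinates along `ι`. -/
theorem integral_split {k N : ℕ} (ι : Fin k ↪ Fin N) (F : (Fin k → R3) → ℂ)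
    (G : ({n // n ∉ Set.range ι} → R3) → ℂ) :
    ∫ x : Fin N → R3, F (x ∘ ι) * G (fun r => x r) = (∫ y, F y) * ∫ z, G z := by
  obtain ⟨e, he, hx⟩ := split_measurePreserving ι
  rw [← integral_prod_mul, ← Measure.volume_eq_prod, ← he.integral_comp e.measurableEmbedding]
  simp [hx]

/-- `f ↦ f(x ∘ ι) ∏_{n ∉ range ι} ψ_n(x_n)` on vectors of `L²`. -/
def embVec {k N : ℕ} (ι : Fin k ↪ Fin N) (ψ : Fin N → OneH) (f : HS k) : HS N :=
  (memLp_embFun ι ψ f).toLp _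

theorem coe_embVec {k N : ℕ} (ι : Fin k ↪ Fin N) (ψ : Fin N → OneH) (f : HS k) :
    ⇑(embVec ι ψ f) =ᵐ[volume] embFun ι ψ f := MemLp.coeFn_toLp _

open Classical in
theorem inner_embVec {k N : ℕ} (ι : Fin k ↪ Fin N) (ψ χ : Fin N → OneH) (f g : HS k) :
    ⟪embVec ι ψ f, embVec ι χ g⟫ =
      ⟪f, g⟫ * ∏ r : {n // n ∉ Set.range ι}, ⟪ψ r, χ r⟫ := by
  simp only [L2.inner_def]
  rw [← integral_fintype_prod_volume_eq_prod fun (r : {n // n ∉ Set.range ι}) x =>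
    ⟪ψ r x, χ r x⟫, ← integral_split ι]
  refine integral_congr_ae ?_
  filter_upwards [coe_embVec ι ψ f, coe_embVec ι χ g] with x h1 h2
  simp only [h1, h2, embFun, RCLike.inner_apply, map_mul, map_prod, Finset.prod_mul_distrib]
  ring

/-- The bounded operator `L²(ℝ^{3k}) → L²(ℝ^{3N})`, `f ↦ f(x ∘ ι) ∏_{n ∉ range ι} ψ_n(x_n)`. -/
def emb {k N : ℕ} (ι : Fin k ↪ Fin N) (ψ : Fin N → OneH) : HS k →L[ℂ] HS N :=
  LinearMap.mkContinuousOfExistsBound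
    { toFun := embVec ι ψ
      map_add' := fun f g => by
        apply Lp.ext
        filter_upwards [coe_embVec ι ψ f, coe_embVec ι ψ g, coe_embVec ι ψ (f + g),
          Lp.coeFn_add (embVec ι ψ f) (embVec ι ψ g),
          (split_quasi ι).ae_eq_comp (Lp.coeFn_add f g)] with x h1 h2 h3 h4 h5
        simp only [Function.comp_apply, Pi.add_apply] at h5
        rw [h4, Pi.add_apply, h1, h2, h3]
        simp only [embFun, h5, add_mul]
      map_smul' := fun c f => by
        apply Lp.ext
        filter_upwards [coe_embVec ι ψ f, coe_embVec ι ψ (c • f),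
          Lp.coeFn_smul c (embVec ι ψ f),
          (split_quasi ι).ae_eq_comp (Lp.coeFn_smul c f)] with x h1 h3 h4 h5
        simp only [Function.comp_apply, Pi.smul_apply, smul_eq_mul] at h5
        rw [RingHom.id_apply, h4, Pi.smul_apply, h1, h3]
        simp only [embFun, h5, smul_eq_mul, mul_assoc] }
    (by
      classical
      refine ⟨√‖∏ r : {n // n ∉ Set.range ι}, ⟪ψ r, ψ r⟫‖, fun f => ?_⟩
      refine le_of_sq_le_sq ?_ (by positivity)
      rw [mul_pow, Real.sq_sqrt (norm_nonneg _)]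
      have h1 : ‖embVec ι ψ f‖ ^ 2 = ‖⟪embVec ι ψ f, embVec ι ψ f⟫‖ := by
        rw [inner_self_eq_norm_sq_to_K]; simp
      have h2 : ‖f‖ ^ 2 = ‖⟪f, f⟫‖ := by
        rw [inner_self_eq_norm_sq_to_K]; simp
      refine le_of_eq ?_
      change ‖embVec ι ψ f‖ ^ 2 = _
      rw [h1, h2, inner_embVec, norm_mul, mul_comm])

theorem coe_emb {k N : ℕ} (ι : Fin k ↪ Fin N) (ψ : Fin N → OneH) (f : HS k) :
    ⇑(emb ι ψ f) =ᵐ[volume] embFun ι ψ f := coe_embVec ι ψ f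

open Classical in
theorem inner_emb {k N : ℕ} (ι : Fin k ↪ Fin N) (ψ χ : Fin N → OneH) (f g : HS k) :
    ⟪emb ι ψ f, emb ι χ g⟫ =
      ⟪f, g⟫ * ∏ r : {n // n ∉ Set.range ι}, ⟪ψ r, χ r⟫ := inner_embVec ι ψ χ f g

open Classical in
theorem prod_split {k N : ℕ} {M : Type*} [CommMonoid M] (ι : Fin k ↪ Fin N) (w : Fin N → M) :
    ∏ n, w n = (∏ i, w (ι i)) * ∏ r : {n // n ∉ Set.range ι}, w r := by
  have h : ∏ i, w (ι i) = ∏ r : {n // n ∈ Set.range ι}, w r :=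
    Fintype.prod_equiv (Equiv.ofInjective ι ι.injective) _ _ fun _ => rfl
  rw [← Fintype.prod_subtype_mul_prod_subtype (· ∈ Set.range ι) w, h]
  congr!

theorem emb_pureT {k N : ℕ} (ι : Fin k ↪ Fin N) (ψ : Fin N → OneH) :
    emb ι ψ (pureT fun i => ψ (ι i)) = pureT ψ := by
  apply Lp.ext
  filter_upwards [coe_emb ι ψ (pureT fun i => ψ (ι i)), coe_pureT ψ,
    (split_quasi ι).ae_eq_comp (coe_pureT fun i => ψ (ι i))] with x h1 h2 h3
  simp only [Function.comp_apply] at h3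
  rw [h1, h2, prod_split ι, embFun, h3]

/-- A lift of `O` intertwines with the embeddings `emb ι ψ`. -/
theorem IsLift.apply_emb {k N : ℕ} {O : HS k →L[ℂ] HS k} {ι : Fin k ↪ Fin N}
    {T : HS N →L[ℂ] HS N} (hT : IsLift k N O ι T) (ψ : Fin N → OneH) (f : HS k) :
    T (emb ι ψ f) = emb ι ψ (O f) := by
  classical
  refine hT f (fun x => ∏ r : {n // n ∉ Set.range ι}, ψ r (x r)) _ _ ?_ (coe_emb ι ψ f)
    (coe_emb ι ψ (O f))
  intro x y hxy
  exact Finset.prod_congr rfl fun r _ => by rw [hxy r r.2]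

/-! ### Symmetry of the lifts, contractions and overlaps -/

/-- The lift of a self-adjoint `O` is symmetric: it suffices to test against elementary
tensors, where the identity reduces to the symmetry of `O` via `IsLift.apply_emb`. -/
theorem IsLift.inner_symm {k N : ℕ} {O : HS k →L[ℂ] HS k} (hO : IsSelfAdjoint O)
    {ι : Fin k ↪ Fin N} {T : HS N →L[ℂ] HS N} (hT : IsLift k N O ι T) (ψ : Fin N → OneH)
    (Ψ : HS N) : ⟪pureT ψ, T Ψ⟫ = ⟪T (pureT ψ), Ψ⟫ := by
  classical
  rw [← ContinuousLinearMap.adjoint_inner_left, ← sub_eq_zero, ← inner_sub_left]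
  suffices h : T.adjoint (pureT ψ) - T (pureT ψ) = 0 by rw [h, inner_zero_left]
  refine eq_zero_of_inner_pureT _ fun χ => ?_
  rw [inner_sub_right, ContinuousLinearMap.adjoint_inner_right, sub_eq_zero,
    ← emb_pureT ι ψ, ← emb_pureT ι χ, hT.apply_emb, hT.apply_emb, inner_emb, inner_emb,
    ← ContinuousLinearMap.adjoint_inner_right, hO.adjoint_eq]

theorem coe_pureT_update {k : ℕ} (φ : OneH) (i : Fin k) (g : OneH) :
    ⇑(pureT (Function.update (fun _ => φ) i g)) =ᵐ[volume]
      fun x : Fin k → R3 => g (x i) * ∏ l ∈ Finset.univ.erase i, φ (x l) := by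
  filter_upwards [coe_pureT (Function.update (fun _ => φ) i g)] with x hx
  rw [hx, ← Finset.mul_prod_erase _ _ (Finset.mem_univ i), Function.update_self]
  congr 1
  refine Finset.prod_congr rfl fun l hl => ?_
  rw [Function.update_of_ne (Finset.ne_of_mem_erase hl)]

theorem inner_pureT_update {k : ℕ} (φ : OneH) (i : Fin k) (g : OneH) (f : Fin k → OneH) :
    ⟪pureT (Function.update (fun _ => φ) i g), pureT f⟫ =
      ⟪g, f i⟫ * ∏ l ∈ Finset.univ.erase i, ⟪φ, f l⟫ := by
  rw [inner_pureT, ← Finset.mul_prod_erase _ _ (Finset.mem_univ i), Function.update_self]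
  congr 1
  refine Finset.prod_congr rfl fun l hl => ?_
  rw [Function.update_of_ne (Finset.ne_of_mem_erase hl)]

/-- The operator `g ↦ φ^{⊗(i-1)} ⊗ g ⊗ φ^{⊗(k-i)}` from `L²(ℝ³)` to `L²(ℝ^{3k})`. -/
def insertAt {k : ℕ} (φ : OneH) (i : Fin k) : OneH →L[ℂ] HS k :=
  LinearMap.mkContinuousOfExistsBound
    { toFun := fun g => pureT (Function.update (fun _ => φ) i g)
      map_add' := fun f g => by
        apply Lp.ext
        filter_upwards [coe_pureT_update φ i f, coe_pureT_update φ i g,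
          coe_pureT_update φ i (f + g),
          Lp.coeFn_add (pureT (Function.update (fun _ => φ) i f))
            (pureT (Function.update (fun _ => φ) i g)),
          ae_comp_eval i (Lp.coeFn_add f g)] with x h1 h2 h3 h4 h5
        rw [h4, Pi.add_apply, h1, h2, h3, h5, Pi.add_apply, add_mul]
      map_smul' := fun c f => by
        apply Lp.ext
        filter_upwards [coe_pureT_update φ i f, coe_pureT_update φ i (c • f),
          Lp.coeFn_smul c (pureT (Function.update (fun _ => φ) i f)),
          ae_comp_eval i (Lp.coeFn_smul c f)] with x h1 h3 h4 h5
        rw [RingHom.id_apply, h4, Pi.smul_apply, h1, h3, h5, Pi.smul_apply, smul_eq_mul,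
          smul_eq_mul, mul_assoc] }
    (by
      refine ⟨√‖∏ l ∈ Finset.univ.erase i, ⟪φ, φ⟫‖, fun g => ?_⟩
      refine le_of_sq_le_sq ?_ (by positivity)
      rw [mul_pow, Real.sq_sqrt (norm_nonneg _)]
      have h1 : ∀ {m : ℕ} (F : HS m), ‖F‖ ^ 2 = ‖⟪F, F⟫‖ := fun F => by
        rw [inner_self_eq_norm_sq_to_K]; simp
      have h2 : ‖g‖ ^ 2 = ‖⟪g, g⟫‖ := by
        rw [inner_self_eq_norm_sq_to_K]; simp
      refine le_of_eq ?_
      change ‖pureT (Function.update (fun _ => φ) i g)‖ ^ 2 = _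
      rw [h1, h2, inner_pureT_update, norm_mul, mul_comm, Function.update_self]
      congr 2
      refine Finset.prod_congr rfl fun l hl => ?_
      rw [Function.update_of_ne (Finset.ne_of_mem_erase hl)])

theorem insertAt_apply {k : ℕ} (φ : OneH) (i : Fin k) (g : OneH) :
    insertAt φ i g = pureT (Function.update (fun _ => φ) i g) := rfl

/-- The adjoint of `insertAt φ i` contracts all variables but the `i`-th against `φ`; it sends
`O φ^{⊗k}` to the contracted kernel `h_i`. -/
theorem contract_pureT {k : ℕ} (φ : OneH) (i : Fin k) (f : Fin k → OneH) :
    (insertAt φ i).adjoint (pureT f) = (∏ l ∈ Finset.univ.erase i, ⟪φ, f l⟫) • f i := by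
  refine ext_inner_left ℂ fun g => ?_
  rw [ContinuousLinearMap.adjoint_inner_right, insertAt_apply, inner_pureT_update,
    inner_smul_right, mul_comm]

/-- Extension of a family along `ι` by `φ` off the range of `ι`. -/
def extendBy {k N : ℕ} (φ : OneH) (ι : Fin k ↪ Fin N) (f : Fin k → OneH) : Fin N → OneH :=
  Function.extend ι f fun _ => φ

theorem extendBy_apply {k N : ℕ} (φ : OneH) (ι : Fin k ↪ Fin N) (f : Fin k → OneH) (i : Fin k) :
    extendBy φ ι f (ι i) = f i := ι.injective.extend_apply _ _ _

theorem extendBy_of_notMem {k N : ℕ} (φ : OneH) (ι : Fin k ↪ Fin N) (f : Fin k → OneH) {n : Fin N}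
    (hn : n ∉ Set.range ι) : extendBy φ ι f n = φ := Function.extend_apply' _ _ _ hn

theorem emb_pureT_extendBy {k N : ℕ} (φ : OneH) (ι : Fin k ↪ Fin N) (f : Fin k → OneH) :
    emb ι (fun _ => φ) (pureT f) = pureT (extendBy φ ι f) := by
  classical
  rw [← emb_pureT ι]
  simp only [extendBy_apply]
  apply Lp.ext
  filter_upwards [coe_emb ι (fun _ => φ) (pureT f), coe_emb ι (extendBy φ ι f) (pureT f)] with x h1 h2
  rw [h1, h2]
  simp only [embFun]
  congr 1
  exact Finset.prod_congr rfl fun r _ => by rw [extendBy_of_notMem φ ι f r.2]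

theorem prod_extendBy {k N : ℕ} {φ : OneH} (hφ : ⟪φ, φ⟫ = 1) (ι : Fin k ↪ Fin N)
    (f : Fin k → OneH) (i : Fin k) :
    ∏ n ∈ Finset.univ.erase (ι i), ⟪φ, extendBy φ ι f n⟫ = ∏ l ∈ Finset.univ.erase i, ⟪φ, f l⟫ := by
  classical
  symm
  refine Finset.prod_of_injOn ι ι.injective.injOn ?_ ?_ ?_
  · intro l hl
    simpa using hl
  · intro n _ hn
    rw [extendBy_of_notMem, hφ]
    rintro ⟨l, rfl⟩
    simp_all
  · intro l _
    rw [extendBy_apply]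

/-- If exactly `ι i = ι' j` is shared, the overlap of two embedded vectors is the overlap of
their contractions onto the shared variable. -/
theorem inner_emb_single {k N : ℕ} {φ : OneH} (hφ : ⟪φ, φ⟫ = 1) (ι ι' : Fin k ↪ Fin N)
    (i j : Fin k) (hij : ι i = ι' j) (hov : ∀ l l', ι l = ι' l' → l = i) (f g : HS k) :
    ⟪emb ι (fun _ => φ) f, emb ι' (fun _ => φ) g⟫ =
      ⟪(insertAt φ i).adjoint f, (insertAt φ j).adjoint g⟫ := by
  have h : (emb ι (fun _ => φ)).adjoint ∘L emb ι' (fun _ => φ) =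
      insertAt φ i ∘L (insertAt φ j).adjoint := by
    refine clm_eq_of_pureT fun f g => ?_
    rw [ContinuousLinearMap.comp_apply, ContinuousLinearMap.comp_apply,
      ContinuousLinearMap.adjoint_inner_right,
      ← ContinuousLinearMap.adjoint_inner_left (insertAt φ i),
      contract_pureT, contract_pureT, emb_pureT_extendBy, emb_pureT_extendBy, inner_pureT,
      inner_smul_left, inner_smul_right, ← prod_extendBy hφ ι f i, ← prod_extendBy hφ ι' g j,
      ← hij, map_prod, ← Finset.mul_prod_erase _ _ (Finset.mem_univ (ι i)), extendBy_apply]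
    have h1 : extendBy φ ι' g (ι i) = g j := by rw [hij, extendBy_apply]
    have h2 : ∏ n ∈ Finset.univ.erase (ι i), ⟪extendBy φ ι f n, extendBy φ ι' g n⟫ =
        ∏ n ∈ Finset.univ.erase (ι i),
          (starRingEnd ℂ ⟪φ, extendBy φ ι f n⟫ * ⟪φ, extendBy φ ι' g n⟫) := by
      refine Finset.prod_congr rfl fun n hn => ?_
      rw [inner_conj_symm]
      by_cases hn' : n ∈ Set.range ι
      · have : n ∉ Set.range ι' := by
          obtain ⟨l, rfl⟩ := hn'
          rintro ⟨l', h'⟩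
          rw [hov l l' h'.symm] at hn
          simp at hn
        rw [extendBy_of_notMem φ ι' g this, hφ, mul_one]
      · rw [extendBy_of_notMem φ ι f hn', hφ, one_mul]
    rw [h1, h2, Finset.prod_mul_distrib]
    ring
  have := congrArg (fun A : HS k →L[ℂ] HS k => ⟪f, A g⟫) h
  simp only [ContinuousLinearMap.comp_apply, ContinuousLinearMap.adjoint_inner_right] at this
  rw [this, ContinuousLinearMap.adjoint_inner_left]

/-- Vectors embedded along disjoint index tuples are uncorrelated in the state `φ^{⊗N}`. -/
theorem inner_emb_disjoint {k N : ℕ} {φ : OneH} (hφ : ⟪φ, φ⟫ = 1) (ι ι' : Fin k ↪ Fin N)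
    (hov : ∀ l l', ι l ≠ ι' l') (f g : HS k) :
    ⟪emb ι (fun _ => φ) f, emb ι' (fun _ => φ) g⟫ =
      ⟪f, pureT fun _ => φ⟫ * ⟪pureT fun _ => φ, g⟫ := by
  have h : (emb ι (fun _ => φ)).adjoint ∘L emb ι' (fun _ => φ) =
      (innerSL ℂ (pureT fun _ : Fin k => φ)).smulRight (pureT fun _ : Fin k => φ) := by
    refine clm_eq_of_pureT fun f g => ?_
    rw [ContinuousLinearMap.comp_apply, ContinuousLinearMap.smulRight_apply,
      ContinuousLinearMap.adjoint_inner_right, innerSL_apply_apply, emb_pureT_extendBy, emb_pureT_extendBy,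
      inner_smul_right, inner_pureT, inner_pureT, inner_pureT]
    have h1 : ∏ i, ⟪φ, g i⟫ = ∏ n, ⟪φ, extendBy φ ι' g n⟫ :=
      Fintype.prod_of_injective ι' ι'.injective _ _
        (fun n hn => by rw [extendBy_of_notMem _ _ _ hn, hφ]) fun i => by rw [extendBy_apply]
    have h2 : ∏ i, ⟪f i, φ⟫ = ∏ n, ⟪extendBy φ ι f n, φ⟫ :=
      Fintype.prod_of_injective ι ι.injective _ _
        (fun n hn => by rw [extendBy_of_notMem _ _ _ hn, hφ]) fun i => by rw [extendBy_apply]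
    rw [h1, h2, ← Finset.prod_mul_distrib]
    refine Finset.prod_congr rfl fun n _ => ?_
    by_cases hn : n ∈ Set.range ι
    · have : n ∉ Set.range ι' := by
        obtain ⟨l, rfl⟩ := hn
        rintro ⟨l', h'⟩
        exact hov l l' h'.symm
      rw [extendBy_of_notMem φ ι' g this, hφ, one_mul]
    · rw [extendBy_of_notMem φ ι f hn, hφ, mul_one]
  have := congrArg (fun A : HS k →L[ℂ] HS k => ⟪f, A g⟫) h
  simp only [ContinuousLinearMap.comp_apply, ContinuousLinearMap.adjoint_inner_right,
    ContinuousLinearMap.smulRight_apply, inner_smul_right, innerSL_apply_apply] at this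
  rw [this, mul_comm]

/-! ### Counting pairs of index tuples -/

theorem tendsto_descFactorial_div_pow (k : ℕ) :
    Tendsto (fun N : ℕ => (N.descFactorial k : ℝ) / (N : ℝ) ^ k) atTop (nhds 1) := by
  induction k with
  | zero => simp
  | succ k ih =>
    have h1 : Tendsto (fun N : ℕ => 1 - (k : ℝ) / N) atTop (nhds 1) := by
      simpa using (tendsto_const_div_atTop_nhds_zero_nat (k : ℝ)).const_sub 1
    have := h1.mul ih
    rw [one_mul] at this
    refine this.congr' ?_
    filter_upwards [eventually_ge_atTop (k + 1)] with N hN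
    have hN0 : (N : ℝ) ≠ 0 := by
      have : 0 < N := by omega
      positivity
    rw [Nat.descFactorial_succ, Nat.cast_mul, Nat.cast_sub (by omega)]
    field_simp
    ring

/-- The number of pairs of embeddings with `ι i = ι' j` is `D² / N`, where `D = (N)_k` is the
number of embeddings: by symmetry `ι i` is equidistributed on `Fin N`. -/
theorem card_single_overlap {k N : ℕ} (i j : Fin k) :
    (N : ℝ) * ∑ ι : Fin k ↪ Fin N, ∑ ι' : Fin k ↪ Fin N, (if ι i = ι' j then (1 : ℝ) else 0) =
      (N.descFactorial k : ℝ) ^ 2 := by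
  have hsum : ∀ i : Fin k, ∑ n : Fin N, ∑ ι : Fin k ↪ Fin N,
      (if ι i = n then (1 : ℝ) else 0) = N.descFactorial k := by
    intro i
    rw [Finset.sum_comm]
    simp [Fintype.card_embedding_eq]
  have hsym : ∀ (i : Fin k) (n n' : Fin N), ∑ ι : Fin k ↪ Fin N,
      (if ι i = n then (1 : ℝ) else 0) = ∑ ι : Fin k ↪ Fin N, (if ι i = n' then (1 : ℝ) else 0) := by
    intro i n n'
    refine Fintype.sum_equiv (Equiv.embeddingCongr (Equiv.refl _) (Equiv.swap n n')) _ _ ?_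
    intro ι
    have : (Equiv.embeddingCongr (Equiv.refl _) (Equiv.swap n n') ι) i = Equiv.swap n n' (ι i) :=
      rfl
    rw [this]
    congr 1
    rw [Equiv.swap_apply_eq_iff, Equiv.swap_apply_right]
  have hd : ∀ (i : Fin k) (n : Fin N), (N : ℝ) * ∑ ι : Fin k ↪ Fin N,
      (if ι i = n then (1 : ℝ) else 0) = N.descFactorial k := by
    intro i n
    rw [← hsum i, Finset.sum_congr rfl fun n' _ => hsym i n' n]
    simp
  have : ∑ ι : Fin k ↪ Fin N, ∑ ι' : Fin k ↪ Fin N, (if ι i = ι' j then (1 : ℝ) else 0) =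
      ∑ n : Fin N, (∑ ι : Fin k ↪ Fin N, (if ι i = n then (1 : ℝ) else 0)) *
        ∑ ι' : Fin k ↪ Fin N, (if ι' j = n then (1 : ℝ) else 0) := by
    simp_rw [Finset.sum_mul_sum]
    rw [eq_comm, Finset.sum_comm]
    refine Finset.sum_congr rfl fun ι _ => ?_
    rw [Finset.sum_comm]
    refine Finset.sum_congr rfl fun ι' _ => ?_
    simp [eq_comm]
  rw [this, Finset.mul_sum]
  simp_rw [← mul_assoc, hd]
  rw [← Finset.mul_sum, hsum, sq]

/-- Pairs of embeddings sharing two prescribed values have at most `2k - 2` free values. -/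
theorem card_double_overlap {k N : ℕ} {i i' : Fin k} (hi : i ≠ i') (j j' : Fin k) :
    ∑ ι : Fin k ↪ Fin N, ∑ ι' : Fin k ↪ Fin N,
      (if ι i = ι' j ∧ ι i' = ι' j' then (1 : ℝ) else 0) ≤ (N : ℝ) ^ (2 * k - 2) := by
  classical
  rw [← Fintype.sum_prod_type' (f := fun ι ι' : Fin k ↪ Fin N =>
    if ι i = ι' j ∧ ι i' = ι' j' then (1 : ℝ) else 0), Finset.sum_boole]
  set S := {p : (Fin k ↪ Fin N) × (Fin k ↪ Fin N) | p.1 i = p.2 j ∧ p.1 i' = p.2 j'} with hS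
  -- a pair is determined by `ι'` and by `ι` off `{i, i'}`
  let F : S → ({l : Fin k // l ∉ ({i, i'} : Finset (Fin k))} → Fin N) × (Fin k → Fin N) :=
    fun p => (fun l => p.1.1 l, p.1.2)
  have hF : Function.Injective F := by
    rintro ⟨⟨a, b⟩, h1, h2⟩ ⟨⟨a', b'⟩, h1', h2'⟩ h
    simp only [F, Prod.mk.injEq] at h
    obtain ⟨ha, hb⟩ := h
    have hb' : b = b' := DFunLike.coe_injective hb
    subst hb'
    have : a = a' := by
      ext l : 1
      by_cases hl : l ∈ ({i, i'} : Finset (Fin k))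
      · simp only [Finset.mem_insert, Finset.mem_singleton] at hl
        rcases hl with rfl | rfl
        · exact h1.trans h1'.symm
        · exact h2.trans h2'.symm
      · exact congrFun ha ⟨l, hl⟩
    subst this
    rfl
  have hcard := Fintype.card_le_of_injective F hF
  have hk2 : 2 ≤ k := by
    have := i.2; have := i'.2
    have : (i : ℕ) ≠ i' := fun h => hi (Fin.ext h)
    omega
  rw [Fintype.card_prod, Fintype.card_fun, Fintype.card_fun, Fintype.card_fin, Fintype.card_fin,
    Fintype.card_subtype_compl, Fintype.card_fin, Fintype.card_coe, Finset.card_pair hi,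
    ← pow_add] at hcard
  have he : k - 2 + k = 2 * k - 2 := by omega
  rw [he] at hcard
  have : (Finset.univ.filter fun p : (Fin k ↪ Fin N) × (Fin k ↪ Fin N) =>
      p.1 i = p.2 j ∧ p.1 i' = p.2 j').card = Fintype.card S := by
    rw [Fintype.card_subtype]; rfl
  rw [this]
  exact_mod_cast hcard

/-- A two-body sum over pairs of embeddings that vanishes on disjoint pairs is governed, to
leading order `N^{2k-1}`, by the pairs sharing exactly one value. -/
theorem tendsto_overlap_sum {k : ℕ} (hk : 0 < k) (c : Fin k → Fin k → ℝ) (C : ℝ)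
    (b : ∀ N, (Fin k ↪ Fin N) → (Fin k ↪ Fin N) → ℝ)
    (h0 : ∀ N, 2 * k ≤ N → ∀ ι ι' : Fin k ↪ Fin N, (∀ l l', ι l ≠ ι' l') → b N ι ι' = 0)
    (h1 : ∀ N, 2 * k ≤ N → ∀ (ι ι' : Fin k ↪ Fin N) (i j : Fin k), ι i = ι' j →
      (∀ l l', ι l = ι' l' → l = i) → b N ι ι' = c i j)
    (hC : ∀ N, 2 * k ≤ N → ∀ ι ι' : Fin k ↪ Fin N, |b N ι ι'| ≤ C) :
    Tendsto (fun N : ℕ => ((N : ℝ) ^ (2 * k - 1))⁻¹ *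
      ∑ ι : Fin k ↪ Fin N, ∑ ι' : Fin k ↪ Fin N, b N ι ι') atTop
      (nhds (∑ i, ∑ j, c i j)) := by
  classical
  -- `b'` is the leading part; it agrees with `b` off the pairs sharing at least two values,
  -- whose number is at most the sum of `M`
  set b' : ∀ N, (Fin k ↪ Fin N) → (Fin k ↪ Fin N) → ℝ := fun N ι ι' =>
    ∑ i, ∑ j, c i j * if ι i = ι' j then 1 else 0 with hb'
  set K : ℝ := |C| + ∑ i, ∑ j, |c i j| with hK
  have hK0 : 0 ≤ K := by positivity
  set M : ∀ N, (Fin k ↪ Fin N) → (Fin k ↪ Fin N) → ℝ := fun N ι ι' =>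
    ∑ q : (Fin k × Fin k) × (Fin k × Fin k), if q.1.1 ≠ q.1.2 then
      (if ι q.1.1 = ι' q.2.1 ∧ ι q.1.2 = ι' q.2.2 then 1 else 0) else 0 with hM
  have hM0 : ∀ N ι ι', 0 ≤ M N ι ι' := fun N ι ι' =>
    Finset.sum_nonneg fun q _ => by split_ifs <;> norm_num
  have hbound : ∀ N, 2 * k ≤ N → ∀ ι ι', |b N ι ι' - b' N ι ι'| ≤ K * M N ι ι' := by
    intro N hN ι ι'
    by_cases hd : ∃ i i' j j', i ≠ i' ∧ ι i = ι' j ∧ ι i' = ι' j'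
    · obtain ⟨i, i', j, j', hi, hj, hj'⟩ := hd
      have hM1 : 1 ≤ M N ι ι' := by
        refine le_trans ?_ (Finset.single_le_sum
          (f := fun q : (Fin k × Fin k) × (Fin k × Fin k) => if q.1.1 ≠ q.1.2 then
            (if ι q.1.1 = ι' q.2.1 ∧ ι q.1.2 = ι' q.2.2 then (1 : ℝ) else 0) else 0)
          (fun q _ => by split_ifs <;> norm_num) (Finset.mem_univ ((i, i'), (j, j'))))
        simp [hi, hj, hj']
      have hb1 : |b' N ι ι'| ≤ ∑ i, ∑ j, |c i j| := by
        refine (Finset.abs_sum_le_sum_abs _ _).trans (Finset.sum_le_sum fun i _ => ?_)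
        refine (Finset.abs_sum_le_sum_abs _ _).trans (Finset.sum_le_sum fun j _ => ?_)
        split_ifs <;> simp
      calc |b N ι ι' - b' N ι ι'| ≤ |b N ι ι'| + |b' N ι ι'| := abs_sub _ _
        _ ≤ K := add_le_add ((hC N hN ι ι').trans (le_abs_self C)) hb1
        _ ≤ K * M N ι ι' := le_mul_of_one_le_right hK0 hM1
    · push Not at hd
      have : b N ι ι' = b' N ι ι' := by
        by_cases hs : ∃ i j, ι i = ι' j
        · obtain ⟨i, j, hij⟩ := hs
          have hu : ∀ l l', ι l = ι' l' → l = i := fun l l' hl => by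
            by_contra hne
            exact hd l i l' j hne hl hij
          rw [h1 N hN ι ι' i j hij hu, hb']
          simp only
          rw [Finset.sum_eq_single i, Finset.sum_eq_single j, if_pos hij, mul_one]
          · intro j' _ hne
            rw [if_neg, mul_zero]
            intro h
            exact hne (ι'.injective (h.symm.trans hij))
          · simp
          · intro i' _ hne
            refine Finset.sum_eq_zero fun j' _ => ?_
            rw [if_neg, mul_zero]
            exact fun h => hne (hu _ _ h)
          · simp
        · push Not at hs
          rw [h0 N hN ι ι' hs, hb']
          simp [hs]
      rw [this, sub_self, abs_zero]
      exact mul_nonneg hK0 (hM0 N ι ι')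
  have hMsum : ∀ N, ∑ ι, ∑ ι', M N ι ι' ≤
      Fintype.card ((Fin k × Fin k) × (Fin k × Fin k)) * (N : ℝ) ^ (2 * k - 2) := by
    intro N
    have : ∑ ι, ∑ ι', M N ι ι' = ∑ q : (Fin k × Fin k) × (Fin k × Fin k),
        ∑ ι : Fin k ↪ Fin N, ∑ ι' : Fin k ↪ Fin N, if q.1.1 ≠ q.1.2 then
          (if ι q.1.1 = ι' q.2.1 ∧ ι q.1.2 = ι' q.2.2 then (1 : ℝ) else 0) else 0 := by
      rw [hM, Finset.sum_comm]
      rw [Finset.sum_comm]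
      simp only
      rw [Finset.sum_congr rfl fun ι _ => Finset.sum_comm]
      rw [Finset.sum_comm]
    rw [this, ← nsmul_eq_mul, ← Finset.card_univ]
    refine Finset.sum_le_card_nsmul _ _ _ fun q _ => ?_
    by_cases hq : q.1.1 = q.1.2
    · simp [hq]
    · simpa [hq] using card_double_overlap hq q.2.1 q.2.2
  have hmain : Tendsto (fun N : ℕ => ((N : ℝ) ^ (2 * k - 1))⁻¹ * ∑ ι, ∑ ι', b' N ι ι') atTop
      (nhds (∑ i, ∑ j, c i j)) := by
    have h2 := ((tendsto_descFactorial_div_pow k).pow 2).const_mul (∑ i, ∑ j, c i j)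
    rw [one_pow, mul_one] at h2
    refine h2.congr' ?_
    filter_upwards [eventually_gt_atTop 0] with N hN
    have hN0 : (N : ℝ) ≠ 0 := by positivity
    have : (N : ℝ) * ∑ ι, ∑ ι', b' N ι ι' = (∑ i, ∑ j, c i j) * (N.descFactorial k : ℝ) ^ 2 := by
      have e1 : ∑ ι, ∑ ι', b' N ι ι' = ∑ i, ∑ j, c i j * ∑ ι : Fin k ↪ Fin N,
          ∑ ι' : Fin k ↪ Fin N, if ι i = ι' j then (1 : ℝ) else 0 := by
        simp only [hb', Finset.mul_sum]
        rw [Finset.sum_congr rfl fun ι _ => Finset.sum_comm, Finset.sum_comm]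
        refine Finset.sum_congr rfl fun i _ => ?_
        rw [Finset.sum_congr rfl fun ι _ => Finset.sum_comm, Finset.sum_comm]
      rw [e1, Finset.mul_sum, Finset.sum_mul]
      refine Finset.sum_congr rfl fun i _ => ?_
      rw [Finset.mul_sum, Finset.sum_mul]
      refine Finset.sum_congr rfl fun j _ => ?_
      rw [← card_single_overlap i j]
      ring
    have hpow : (N : ℝ) ^ (2 * k - 1) * N = (N : ℝ) ^ k * (N : ℝ) ^ k := by
      rw [← pow_succ, ← pow_add]; congr 1; omega
    rw [div_pow, ← mul_div_assoc, ← this, sq, ← hpow]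
    field_simp
  have herr : Tendsto (fun N : ℕ => ((N : ℝ) ^ (2 * k - 1))⁻¹ *
      (∑ ι, ∑ ι', b N ι ι' - ∑ ι, ∑ ι', b' N ι ι')) atTop (nhds 0) := by
    refine squeeze_zero_norm' (a := fun N : ℕ =>
      (K * Fintype.card ((Fin k × Fin k) × (Fin k × Fin k))) / (N : ℝ)) ?_
      (tendsto_const_div_atTop_nhds_zero_nat _)
    filter_upwards [eventually_ge_atTop (2 * k)] with N hN
    have hNpos : (0 : ℝ) < N := by
      have : 0 < N := by omega
      positivity
    have hle : |∑ ι, ∑ ι', b N ι ι' - ∑ ι, ∑ ι', b' N ι ι'| ≤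
        K * (Fintype.card ((Fin k × Fin k) × (Fin k × Fin k)) * (N : ℝ) ^ (2 * k - 2)) := by
      refine le_trans ?_ (mul_le_mul_of_nonneg_left (hMsum N) hK0)
      rw [← Finset.sum_sub_distrib, Finset.mul_sum]
      refine (Finset.abs_sum_le_sum_abs _ _).trans (Finset.sum_le_sum fun ι _ => ?_)
      rw [← Finset.sum_sub_distrib, Finset.mul_sum]
      exact (Finset.abs_sum_le_sum_abs _ _).trans (Finset.sum_le_sum fun ι' _ => hbound N hN ι ι')
    rw [norm_mul, norm_inv, Real.norm_eq_abs, Real.norm_eq_abs, abs_of_pos (by positivity)]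
    have hpow : (N : ℝ) ^ (2 * k - 1) = (N : ℝ) ^ (2 * k - 2) * N := by
      rw [← pow_succ]; congr 1; omega
    rw [inv_mul_le_iff₀ (by positivity), hpow]
    refine hle.trans (le_of_eq ?_)
    field_simp
  have := herr.add hmain
  rw [zero_add] at this
  refine this.congr fun N => ?_
  ring

/-- **Limit of the rescaled variance in a factorized state.**  With
`σ_N² = ⟨φ^{⊗N}, (O_N^{(k)})² φ^{⊗N}⟩ − ⟨φ^{⊗N}, O_N^{(k)} φ^{⊗N}⟩²` the variance of
`O_N^{(k)} = ∑_{i_k ∈ I_N^{(k)}} O_{i_k}` in `φ^{⊗N}`, one has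
`N^{−(2k−1)} σ_N² → ∑_{i,j=1}^k ⟨q h_i, q h_j⟩` as `N → ∞`, where `h_j` are the contracted
kernels of `O` and `q = Id − |φ⟩⟨φ|`. -/
theorem variance_limit
    (k : ℕ) (hk : 0 < k)
    (O : HS k →L[ℂ] HS k) (hO : IsSelfAdjoint O)
    (φ : OneH) (hφ : ‖φ‖ = 1)
    (Φ : ∀ m : ℕ, HS m) (hΦ : ∀ m, IsTensorPow m φ (Φ m))
    (h : Fin k → OneH)
    (hh : ∀ j : Fin k, IsContractedKernel k φ (Φ k) O j (h j))
    (Olift : ∀ N : ℕ, (Fin k ↪ Fin N) → (HS N →L[ℂ] HS N))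
    (hOlift : ∀ N, 2 * k ≤ N → ∀ ι : Fin k ↪ Fin N, IsLift k N O (⇑ι) (Olift N ι))
    (T : ∀ N : ℕ, HS N →L[ℂ] HS N)
    (hT : ∀ N, T N = ∑ ι : Fin k ↪ Fin N, Olift N ι) :
    Tendsto
      (fun N : ℕ => ((N : ℝ) ^ (2 * k - 1))⁻¹ *
        ((⟪Φ N, (T N * T N) (Φ N)⟫).re - ((⟪Φ N, (T N) (Φ N)⟫).re) ^ 2))
      atTop
      (nhds ((∑ i : Fin k, ∑ j : Fin k,
        ⟪h i - ⟪φ, h i⟫ • φ, h j - ⟪φ, h j⟫ • φ⟫).re)) := by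
  set a : ℂ := ⟪Φ k, O (Φ k)⟫ with ha
  have hφ1 : ⟪φ, φ⟫ = 1 := by rw [inner_self_eq_norm_sq_to_K, hφ]; simp
  have hΦp : ∀ m, Φ m = pureT fun _ => φ := fun m => by
    apply Lp.ext
    filter_upwards [hΦ m, coe_pureT fun _ : Fin m => φ] with x h1 h2
    rw [h1, h2]
  have ha_conj : ⟪O (Φ k), Φ k⟫ = a := by
    rw [ha, ← ContinuousLinearMap.adjoint_inner_left, hO.adjoint_eq]
  have ha_im : a.im = 0 := by
    rw [← Complex.conj_eq_iff_im, ha, inner_conj_symm, ha_conj]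
  have hcon : ∀ j, h j = (insertAt φ j).adjoint (O (Φ k)) := fun j => by
    refine ext_inner_left ℂ fun g => ?_
    rw [ContinuousLinearMap.adjoint_inner_right, insertAt_apply]
    exact hh j g _ (coe_pureT_update φ j g)
  have hah : ∀ j, ⟪φ, h j⟫ = a := fun j => by
    rw [hcon, ContinuousLinearMap.adjoint_inner_right, insertAt_apply, Function.update_eq_self,
      ← hΦp]
  -- the vectors `T_ι φ^{⊗N}`
  set W : ∀ N, (Fin k ↪ Fin N) → HS N := fun N ι => emb ι (fun _ => φ) (O (Φ k)) with hW
  have hTΦ : ∀ N, 2 * k ≤ N → ∀ ι : Fin k ↪ Fin N, Olift N ι (Φ N) = W N ι := fun N hN ι => by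
    rw [hΦp N, ← emb_pureT ι, (hOlift N hN ι).apply_emb, ← hΦp k]
  have hΦW : ∀ N (ι : Fin k ↪ Fin N), ⟪Φ N, W N ι⟫ = a := fun N ι => by
    classical
    rw [hΦp N, ← emb_pureT ι, hW, inner_emb, ← hΦp k]
    simp [hφ, ha]
  set b : ∀ N, (Fin k ↪ Fin N) → (Fin k ↪ Fin N) → ℝ := fun N ι ι' =>
    (⟪W N ι, W N ι'⟫).re - a.re ^ 2 with hb
  have hvar : ∀ N, 2 * k ≤ N →
      (⟪Φ N, (T N * T N) (Φ N)⟫).re - ((⟪Φ N, (T N) (Φ N)⟫).re) ^ 2 =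
        ∑ ι, ∑ ι', b N ι ι' := fun N hN => by
    have hT1 : T N (Φ N) = ∑ ι, W N ι := by
      rw [hT, _root_.sum_apply]
      exact Finset.sum_congr rfl fun ι _ => hTΦ N hN ι
    have hT2 : ⟪Φ N, (T N * T N) (Φ N)⟫ = ∑ ι, ∑ ι', ⟪W N ι, W N ι'⟫ := by
      rw [mul_apply_eq_comp, hT1, hT, _root_.sum_apply, inner_sum]
      refine Finset.sum_congr rfl fun ι _ => ?_
      rw [← inner_sum, ← hTΦ N hN ι, hΦp N]
      exact (hOlift N hN ι).inner_symm hO _ _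
    rw [hT2, hT1, inner_sum]
    simp only [hb, hΦW, Complex.re_sum, Finset.sum_sub_distrib, Finset.sum_const,
      nsmul_eq_mul, Complex.mul_re, Complex.natCast_re, Complex.natCast_im]
    ring
  -- `b` vanishes on disjoint pairs, equals `⟨q h_i, q h_j⟩` when only `ι i = ι' j` is shared,
  -- and is bounded uniformly in `N`
  have hlim := tendsto_overlap_sum hk
    (fun i j => (⟪h i - ⟪φ, h i⟫ • φ, h j - ⟪φ, h j⟫ • φ⟫).re)
    (‖O (Φ k)‖ * ‖O (Φ k)‖ + a.re ^ 2) b ?_ ?_ ?_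
  · simp only [Complex.re_sum]
    refine hlim.congr' ?_
    filter_upwards [eventually_ge_atTop (2 * k)] with N hN
    rw [hvar N hN]
  · intro N hN ι ι' hd
    simp only [hb, hW]
    rw [inner_emb_disjoint hφ1 ι ι' hd, ← hΦp k, ha_conj, ← ha, Complex.mul_re, ha_im]
    ring
  · intro N hN ι ι' i j hij hov
    simp only [hb, hW]
    rw [inner_emb_single hφ1 ι ι' i j hij hov, ← hcon, ← hcon]
    have e : ⟪h i, φ⟫ = a := by
      rw [← inner_conj_symm, hah, Complex.conj_eq_iff_im.2 ha_im]
    simp only [inner_sub_left, inner_sub_right, inner_smul_left, inner_smul_right, hah, hφ1, e,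
      Complex.conj_eq_iff_im.2 ha_im, Complex.sub_re, Complex.mul_re, ha_im, mul_one]
    ring
  · intro N hN ι ι'
    have hn : ∀ ι : Fin k ↪ Fin N, ‖W N ι‖ = ‖O (Φ k)‖ := fun ι => by
      classical
      rw [hW, @norm_eq_sqrt_re_inner ℂ, @norm_eq_sqrt_re_inner ℂ, inner_emb]
      simp [hφ]
    have h1 : |(⟪W N ι, W N ι'⟫).re| ≤ ‖O (Φ k)‖ * ‖O (Φ k)‖ := by
      refine (Complex.abs_re_le_norm _).trans ((norm_inner_le_norm _ _).trans (le_of_eq ?_))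
      rw [hn, hn]
    refine (abs_sub _ _).trans (add_le_add h1 (le_of_eq ?_))
    exact abs_of_nonneg (sq_nonneg _)

end
end
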